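/- Let X be an irreducible smooth projective variety of dimension at least 2 contained in the projective space P^n over an algebraically closed field k of characteristic 0. For any closed point P0 on X and any integer a > 1, a general hypersurface H of degree a in P^n passing through P0 intersects X in an irreducible smooth subvariety of codimension 1 on X. -/

import Mathlib

open MvPolynomial

/-- Points of projective `n`-space over `k`. -/
abbrev ProjPt (k : Type) [Field k] (n : ℕ) : Type := Projectivization k (Fin (n+1) → k)

variable {k : Type} [Field k] {n : ℕ}

/-- A polynomial vanishes at a projective point if it vanishes on every
representative vector of the point. -/
def VanishesAt (h : MvPolynomial (Fin (n+1)) k) (x : ProjPt k n) : Prop :=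
  ∀ (v : Fin (n+1) → k) (hv : v ≠ 0), Projectivization.mk k v hv = x → eval v h = 0

/-- Common projective zero locus of a family of polynomials. -/
def projZeroLocus (I : Set (MvPolynomial (Fin (n+1)) k)) : Set (ProjPt k n) :=
  {x | ∀ h ∈ I, VanishesAt h x}

/-- Zariski-closed subsets of projective space: common zero loci of families of
homogeneous polynomials. -/
def IsClosedSub (S : Set (ProjPt k n)) : Prop :=
  ∃ I : Set (MvPolynomial (Fin (n+1)) k),
    (∀ h ∈ I, ∃ m : ℕ, h.IsHomogeneous m) ∧ S = projZeroLocus I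

/-- A subset is irreducible if it is nonempty and is not covered by two closed sets
unless it is contained in one of them. -/
def IsIrredSub (S : Set (ProjPt k n)) : Prop :=
  S.Nonempty ∧ ∀ C₁ C₂ : Set (ProjPt k n),
    IsClosedSub C₁ → IsClosedSub C₂ → S ⊆ C₁ ∪ C₂ → S ⊆ C₁ ∨ S ⊆ C₂

/-- `T` is an irreducible closed subset of `S` (in the subspace Zariski topology). -/
def IsClosedIrredIn (S T : Set (ProjPt k n)) : Prop :=
  T ⊆ S ∧ (∃ C, IsClosedSub C ∧ T = C ∩ S) ∧ IsIrredSub T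

/-- `S` has dimension at least `m` : there is a strictly increasing chain of `m+1`
irreducible closed subsets of `S`. -/
def DimGE (S : Set (ProjPt k n)) (m : ℕ) : Prop :=
  ∃ c : Fin (m+1) → Set (ProjPt k n), StrictMono c ∧ ∀ i, IsClosedIrredIn S (c i)

/-- `S` has (Krull) dimension exactly `d`. -/
def HasDim (S : Set (ProjPt k n)) (d : ℕ) : Prop :=
  DimGE S d ∧ ¬ DimGE S (d+1)

/-- The gradient vector of a polynomial at a vector. -/
noncomputable def gradientAt (h : MvPolynomial (Fin (n+1)) k) (v : Fin (n+1) → k) :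
    Fin (n+1) → k :=
  fun j => eval v (pderiv j h)

/-- The homogeneous polynomials vanishing identically on `S`. -/
def homVanishingPolys (S : Set (ProjPt k n)) : Set (MvPolynomial (Fin (n+1)) k) :=
  {h | (∃ m : ℕ, h.IsHomogeneous m) ∧ ∀ x ∈ S, VanishesAt h x}

/-- Jacobian criterion: `S` (of dimension `d`) is smooth at `x` if the span of the
gradients at `x` of the homogeneous polynomials vanishing on `S` has rank `n - d`. -/
def SmoothPtAt (S : Set (ProjPt k n)) (d : ℕ) (x : ProjPt k n) : Prop :=
  ∀ (v : Fin (n+1) → k) (hv : v ≠ 0), Projectivization.mk k v hv = x →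
    Module.finrank k
      ↥(Submodule.span k {w | ∃ h ∈ homVanishingPolys S, w = gradientAt h v}) = n - d

/-- `S` is an irreducible smooth projective variety of dimension `d`. -/
def IsSmoothVariety (S : Set (ProjPt k n)) (d : ℕ) : Prop :=
  IsClosedSub S ∧ IsIrredSub S ∧ HasDim S d ∧ ∀ x ∈ S, SmoothPtAt S d x

/-- Polynomial function on a `k`-vector space `W`. -/
def IsPolyFun (k : Type) [Field k] {W : Type} [AddCommGroup W] [Module k W] (F : W → k) : Prop :=
  ∃ (r : ℕ) (lam : Fin r → (W →ₗ[k] k)) (p : MvPolynomial (Fin r) k),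
    F = fun w => eval (fun i => lam i w) p

/-- Zariski-closed subsets of a `k`-vector space `W` : common zero loci of families
of polynomial functions. -/
def IsZClosed (k : Type) [Field k] {W : Type} [AddCommGroup W] [Module k W] (Z : Set W) : Prop :=
  ∃ ℱ : Set (W → k), (∀ F ∈ ℱ, IsPolyFun k F) ∧ Z = {w | ∀ F ∈ ℱ, F w = 0}

/-- `Z` is a cone: stable under scalar multiplication. -/
def IsCone (k : Type) [Field k] {W : Type} [AddCommGroup W] [Module k W] (Z : Set W) : Prop :=
  ∀ (c : k) (w : W), w ∈ Z → c • w ∈ Z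

/-- `q` points of projective space are in general position: if `q < n+1` their
representative vectors are linearly independent; if `q = n+1` any `n` of them are
linearly independent. -/
def InGeneralPosition {q : ℕ} (P : Fin q → ProjPt k n) : Prop :=
  if q < n + 1 then LinearIndependent k (fun s => (P s).rep)
  else ∀ s : Fin q, LinearIndependent k (fun t : {t : Fin q // t ≠ s} => (P t.1).rep)

/-!
Write `I` for the homogeneous prime ideal of `X`.

*Smoothness.* A hypersurface `h = 0` through `v₀` is bad at `v` when `h v = 0` and the gradient of
`h` at `v` lies in the conormal space of `X` at `v`. For `v` on `X` away from `v₀` these are `d + 1`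
independent linear conditions on `h`, because products `l ^ (a - 1) * m` of linear forms with
`l v₀ = 0 ≠ l v` and `a > 1` realise every 1-jet at `v`; at `v₀` itself there are `d` of them. Since
`X` has dimension `d`, the forms which are bad somewhere do not fill the space of forms through `v₀`.

*Irreducibility.* At a common zero where the Jacobian matrix of `I + (h)` has the expected rank, the
local ring is regular, hence a domain, so each point of the section lies on only one component.
Hence it remains to see that the section is connected. If it were the disjoint union of the zero
loci of `I₁` and `I₂`, then high powers of two parameters would decompose as `Y₁ ^ N = f₁ + g₁` and
`Y₂ ^ N = f₂ + g₂` with every product `fᵢ * gⱼ` divisible modulo `I` by a high power of `h`. Over a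
polynomial ring in `h, Y₁, Y₂, …` over which the coordinate ring is finite, coprimality of `Y₁` and
`Y₂` gives `p * f₁ ≡ Y₁ ^ N * q` modulo `h ^ m`, with `p ≠ 0` fixed and the degree of `q` bounded.
Then `h ^ m ∣ q * (p - q)`, which forces `q = 0` or `q = p` for large `m`: `f₁` or `g₁` is divisible
by high powers of `h` up to the factor `p`, against Krull's intersection theorem at a component.
-/

section TranscendenceDegree

variable {K A B : Type*} [Field K] [CommRing A] [CommRing B] [Algebra K A] [Algebra K B]

/-- The transcendence degree as a natural number, meaningful when it is finite (as it is for
algebras of finite type over a field). -/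
noncomputable def natTrdeg (R A : Type*) [CommRing R] [CommRing A] [Algebra R A] : ℕ :=
  (Algebra.trdeg R A).toNat

theorem natTrdeg_eq_of_algEquiv {R : Type*} [CommRing R] [Algebra R A] [Algebra R B]
    (e : A ≃ₐ[R] B) : natTrdeg R A = natTrdeg R B := by
  rw [natTrdeg, natTrdeg, ← Cardinal.toNat_lift, e.lift_trdeg_eq, Cardinal.toNat_lift]

theorem natTrdeg_mvPolynomial {R : Type*} [CommRing R] [IsDomain R] (σ : Type*) :
    natTrdeg R (MvPolynomial σ R) = Nat.card σ := by
  rw [natTrdeg, MvPolynomial.trdeg_of_isDomain, Cardinal.toNat_lift, Nat.card]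

theorem natTrdeg_eq_zero_of_isAlgebraic [Algebra.IsAlgebraic K A] : natTrdeg K A = 0 := by
  rw [natTrdeg, trdeg_eq_zero, map_zero]

theorem cast_natTrdeg (K A : Type*) [Field K] [CommRing A] [Algebra K A]
    [Algebra.FiniteType K A] :
    (natTrdeg K A : Cardinal) = Algebra.trdeg K A :=
  Cardinal.cast_toNat_of_lt_aleph0 trdeg_lt_aleph0_of_finiteType

theorem natTrdeg_le_of_surjective [Algebra.FiniteType K A] (f : A →ₐ[K] B)
    (hf : Function.Surjective f) : natTrdeg K B ≤ natTrdeg K A := by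
  have := Algebra.FiniteType.of_surjective f hf
  have h := lift_trdeg_le_of_surjective f hf
  rw [← cast_natTrdeg K A, ← cast_natTrdeg K B, Cardinal.lift_natCast, Cardinal.lift_natCast] at h
  exact_mod_cast h

theorem natTrdeg_le_of_injective [Algebra.FiniteType K A] [Algebra.FiniteType K B]
    (f : A →ₐ[K] B) (hf : Function.Injective f) : natTrdeg K A ≤ natTrdeg K B := by
  have h := lift_trdeg_le_of_injective f hf
  rw [← cast_natTrdeg K A, ← cast_natTrdeg K B, Cardinal.lift_natCast, Cardinal.lift_natCast] at h
  exact_mod_cast h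

theorem card_le_natTrdeg_of_algebraicIndependent [Algebra.FiniteType K A] {ι : Type*}
    {x : ι → A} (hx : AlgebraicIndependent K x) : Nat.card ι ≤ natTrdeg K A := by
  have h := hx.lift_cardinalMk_le_trdeg
  have hlt := Cardinal.lift_lt_aleph0.mpr (trdeg_lt_aleph0_of_finiteType (R := K) (S := A))
  simpa only [natTrdeg, Nat.card, Cardinal.toNat_lift] using Cardinal.toNat_le_toNat h hlt

theorem exists_isTranscendenceBasis_natTrdeg (K A : Type*) [Field K] [CommRing A] [IsDomain A]
    [Algebra K A] [Algebra.FiniteType K A] :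
    ∃ x : Fin (natTrdeg K A) → A, IsTranscendenceBasis K x := by
  obtain ⟨ι, x, hx⟩ := exists_isTranscendenceBasis' K A
  have hcard : Cardinal.mk ι = natTrdeg K A :=
    hx.cardinalMk_eq_trdeg.trans (cast_natTrdeg K A).symm
  obtain ⟨e⟩ : Nonempty (Fin (natTrdeg K A) ≃ ι) := by
    rw [← Cardinal.lift_mk_eq', hcard, Cardinal.mk_fin, Cardinal.lift_natCast,
      Cardinal.lift_natCast]
  exact ⟨x ∘ e, (isTranscendenceBasis_equiv e).mpr hx⟩

theorem natTrdeg_lt_of_surjective [IsDomain A] [IsDomain B] [Algebra.FiniteType K A]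
    (f : A →ₐ[K] B) (hf : Function.Surjective f) {g : A} (hg : g ≠ 0) (hfg : f g = 0) :
    natTrdeg K B < natTrdeg K A := by
  have := Algebra.FiniteType.of_surjective f hf
  obtain ⟨y, hy⟩ := exists_isTranscendenceBasis_natTrdeg K B
  choose x hx using fun i => hf (y i)
  obtain rfl : f ∘ x = y := funext hx
  -- A kernel element algebraic over the lift `x` would give a relation among the `f (x i)`.
  have htrans : Transcendental (Algebra.adjoin K (Set.range x)) g := by
    intro halg
    obtain ⟨⟨r, hr⟩, hr0, c, hc⟩ :=
      halg.exists_nonzero_dvd (mem_nonZeroDivisors_of_ne_zero hg)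
    obtain ⟨p, rfl⟩ := (Algebra.adjoin_range_eq_range_aeval K x).le hr
    replace hc : aeval x p = g * c := hc
    have hp : aeval (f ∘ x) p = 0 := by
      rw [Function.comp_def, ← comp_aeval_apply, hc, map_mul, hfg, zero_mul]
    exact hr0 (Subtype.ext (by simp [hy.1.eq_zero_of_aeval_eq_zero p hp]))
  have hindep := ((hy.1.of_comp f).option_iff_transcendental g).mpr htrans
  simpa using card_le_natTrdeg_of_algebraicIndependent hindep

theorem exists_degreeOf_ne_zero_of_irreducible {σ : Type*} {p : MvPolynomial σ K}
    (hp : Irreducible p) : ∃ j, degreeOf j p ≠ 0 := by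
  by_contra! hall
  have hvars : p.vars = ∅ := by
    ext j; simp [mem_vars_iff_degreeOf_ne_zero, hall]
  rw [vars_eq_empty_iff_eq_C] at hvars
  refine hp.not_isUnit ?_
  rw [hvars] at hp ⊢
  exact (IsUnit.mk0 _ fun h => hp.ne_zero (by rw [h, C_0])).map C

theorem not_dvd_rename_of_degreeOf_ne_zero {σ τ R : Type*} [CommRing R] [IsDomain R] {f : σ → τ}
    (hf : Function.Injective f) {p : MvPolynomial τ R} {j : τ} (hj : degreeOf j p ≠ 0)
    (hjf : j ∉ Set.range f) {q : MvPolynomial σ R} (hq : q ≠ 0) : ¬ p ∣ rename f q := by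
  classical
  rintro ⟨c, hc⟩
  have hne : p * c ≠ 0 := hc ▸ (map_ne_zero_iff _ (rename_injective f hf)).mpr hq
  have hdeg := degreeOf_mul_eq (n := j) (left_ne_zero_of_mul hne) (right_ne_zero_of_mul hne)
  have hmem : j ∈ (rename f q).vars := by
    rw [mem_vars_iff_degreeOf_ne_zero, hc]; omega
  obtain ⟨i, -, hi⟩ := mem_vars_rename _ _ hmem
  exact hjf ⟨i, hi⟩

theorem card_le_natTrdeg_quotient_add_one_of_height_le_one {σ : Type*} [Finite σ]
    (q : Ideal (MvPolynomial σ K)) [q.IsPrime] (hq : q.height ≤ 1) :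
    Nat.card σ ≤ natTrdeg K (MvPolynomial σ K ⧸ q) + 1 := by
  classical
  by_cases hbot : q = ⊥
  · rw [hbot, natTrdeg_eq_of_algEquiv (AlgEquiv.quotientBot K _), natTrdeg_mvPolynomial]
    exact Nat.le_succ _
  obtain ⟨π, hπ, hprime⟩ := Ideal.IsPrime.exists_mem_prime_of_ne_bot ‹q.IsPrime› hbot
  have hheight : q.height = 1 := by
    refine hq.antisymm (Order.one_le_iff_pos.mpr (pos_iff_ne_zero.mpr fun h => hbot ?_))
    exact Ideal.height_eq_zero_iff_eq_bot.mp h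
  have hspan := Ideal.eq_span_singleton_of_height_eq_one hheight hπ hprime
  obtain ⟨j, hj⟩ := exists_degreeOf_ne_zero_of_irreducible hprime.irreducible
  have hindep : Function.Injective ((Ideal.Quotient.mkₐ K q).comp
      (rename ((↑) : {i : σ // i ≠ j} → σ))) := by
    rw [injective_iff_map_eq_zero]
    intro p hp
    by_contra hp0
    refine not_dvd_rename_of_degreeOf_ne_zero Subtype.val_injective hj (by simp) hp0 ?_
    rwa [← Ideal.mem_span_singleton, ← hspan, ← Ideal.Quotient.eq_zero_iff_mem]
  have hle := natTrdeg_le_of_injective _ hindep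
  rw [natTrdeg_mvPolynomial] at hle
  rw [← Nat.card_congr (Equiv.optionSubtypeNe j), Finite.card_option]
  exact Nat.succ_le_succ hle

theorem natTrdeg_le_natTrdeg_quotient_add_one_of_mem_minimalPrimes [IsDomain A]
    [Algebra.FiniteType K A] {f : A} {q : Ideal A} (hq : q ∈ (Ideal.span {f}).minimalPrimes) :
    natTrdeg K A ≤ natTrdeg K (A ⧸ q) + 1 := by
  have : IsNoetherianRing A := Algebra.FiniteType.isNoetherianRing K A
  have : q.IsPrime := hq.1.1
  obtain ⟨s, φ, hφ, hfin⟩ := exists_finite_inj_algHom_of_fg K A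
  let P := MvPolynomial (Fin s) K
  let _ : Algebra P A := φ.toRingHom.toAlgebra
  have : IsScalarTower K P A := IsScalarTower.of_algebraMap_eq fun x => (φ.commutes x).symm
  have : Module.Finite P A := hfin
  have : FaithfulSMul P A := (faithfulSMul_iff_algebraMap_injective _ _).mpr hφ
  have htrdeg : natTrdeg K A = s := by
    have h := ((IsTranscendenceBasis.mvPolynomial (Fin s) K).algebraMap_comp
      (A := A)).lift_cardinalMk_eq_trdeg
    rw [natTrdeg, ← Cardinal.toNat_lift, ← h, Cardinal.mk_fin, Cardinal.lift_natCast,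
      Cardinal.toNat_natCast]
  let q' : Ideal P := q.comap (algebraMap P A)
  have : q.LiesOver q' := ⟨rfl⟩
  have hheight : q'.height ≤ 1 := by
    refine le_trans ?_ (Ideal.height_le_one_of_isPrincipal_of_mem_minimalPrimes _ q hq)
    rw [Ideal.height_eq_height_add_of_liesOver_of_hasGoingDown q' q]
    exact le_self_add
  have hP : Nat.card (Fin s) ≤ natTrdeg K (P ⧸ q') + 1 :=
    card_le_natTrdeg_quotient_add_one_of_height_le_one q' hheight
  have hinj : natTrdeg K (P ⧸ q') ≤ natTrdeg K (A ⧸ q) :=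
    natTrdeg_le_of_injective (Ideal.quotientMapₐ q φ le_rfl) (Ideal.quotientMap_injective)
  rw [Nat.card_fin] at hP
  lia

theorem natTrdeg_quotient_le_of_le [Algebra.FiniteType K A] {p q : Ideal A} (h : p ≤ q) :
    natTrdeg K (A ⧸ q) ≤ natTrdeg K (A ⧸ p) :=
  natTrdeg_le_of_surjective (Ideal.Quotient.factorₐ K h) (Ideal.Quotient.factor_surjective h)

theorem natTrdeg_quotient_lt_of_lt [Algebra.FiniteType K A] {p q : Ideal A} [p.IsPrime]
    [q.IsPrime] (h : p < q) : natTrdeg K (A ⧸ q) < natTrdeg K (A ⧸ p) := by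
  obtain ⟨x, hxq, hxp⟩ := SetLike.exists_of_lt h
  refine natTrdeg_lt_of_surjective (Ideal.Quotient.factorₐ K h.le)
    (Ideal.Quotient.factor_surjective h.le) (g := Ideal.Quotient.mk p x) ?_ ?_
  · rwa [Ne, Ideal.Quotient.eq_zero_iff_mem]
  · simpa [Ideal.Quotient.eq_zero_iff_mem] using hxq

theorem natTrdeg_quotient_le_add_one_of_mem_minimalPrimes_sup [Algebra.FiniteType K A]
    {p q : Ideal A} [p.IsPrime] {f : A} (hq : q ∈ (p ⊔ Ideal.span {f}).minimalPrimes) :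
    natTrdeg K (A ⧸ p) ≤ natTrdeg K (A ⧸ q) + 1 := by
  have hpq : p ≤ q := le_sup_left.trans hq.1.2
  have hmin : q.map (Ideal.Quotient.mk p) ∈
      (Ideal.span {Ideal.Quotient.mk p f}).minimalPrimes := by
    have h := Ideal.minimalPrimes_map_of_surjective (f := Ideal.Quotient.mk p)
      Ideal.Quotient.mk_surjective (Ideal.span {f})
    rw [Ideal.map_span, Set.image_singleton] at h
    rw [h, Ideal.mk_ker, sup_comm]
    exact ⟨q, hq, rfl⟩
  rw [← natTrdeg_eq_of_algEquiv (DoubleQuot.quotQuotEquivQuotOfLEₐ K hpq)]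
  exact natTrdeg_le_natTrdeg_quotient_add_one_of_mem_minimalPrimes hmin

theorem natTrdeg_quotient_eq_add_one_of_mem_minimalPrimes_sup [Algebra.FiniteType K A]
    {p q : Ideal A} [p.IsPrime] {f : A} (hf : f ∉ p)
    (hq : q ∈ (p ⊔ Ideal.span {f}).minimalPrimes) :
    natTrdeg K (A ⧸ p) = natTrdeg K (A ⧸ q) + 1 := by
  have hqp := hq.1.1
  have hfq : f ∈ q := hq.1.2 (Ideal.mem_sup_right (Ideal.mem_span_singleton_self f))
  have hlt : p < q := (le_sup_left.trans hq.1.2).lt_of_ne fun h => hf (h ▸ hfq)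
  exact le_antisymm (natTrdeg_quotient_le_add_one_of_mem_minimalPrimes_sup hq)
    (natTrdeg_quotient_lt_of_lt (K := K) hlt)

theorem natTrdeg_quotient_eq_zero_of_isMaximal [Algebra.FiniteType K A] (M : Ideal A)
    [M.IsMaximal] : natTrdeg K (A ⧸ M) = 0 := by
  let _ := Ideal.Quotient.field M
  have := finite_of_finite_type_of_isJacobsonRing K (A ⧸ M)
  exact natTrdeg_eq_zero_of_isAlgebraic

theorem height_add_natTrdeg_quotient_le_height [Algebra.FiniteType K A] {M : Ideal A}
    [M.IsMaximal] {p : Ideal A} [p.IsPrime] (hpM : p ≤ M) :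
    p.height + natTrdeg K (A ⧸ p) ≤ M.height := by
  have : IsNoetherianRing A := Algebra.FiniteType.isNoetherianRing K A
  obtain ⟨t, ht⟩ : ∃ t, natTrdeg K (A ⧸ p) = t := ⟨_, rfl⟩
  induction t using Nat.strong_induction_on generalizing p with
  | _ t ih =>
  obtain rfl | hlt := hpM.eq_or_lt
  · simp [natTrdeg_quotient_eq_zero_of_isMaximal]
  obtain ⟨f, hfM, hfp⟩ := SetLike.exists_of_lt hlt
  have hsup : p ⊔ Ideal.span {f} ≤ M :=
    sup_le hpM ((Ideal.span_singleton_le_iff_mem M).mpr hfM)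
  obtain ⟨q, hq, hqM⟩ := Ideal.exists_minimalPrimes_le hsup
  have : q.IsPrime := hq.1.1
  have hfq : f ∈ q := hq.1.2 (Ideal.mem_sup_right (Ideal.mem_span_singleton_self f))
  have hpq : p < q := (le_sup_left.trans hq.1.2).lt_of_ne fun h => hfp (h ▸ hfq)
  have hlt := natTrdeg_quotient_lt_of_lt (K := K) hpq
  have hle := natTrdeg_quotient_le_add_one_of_mem_minimalPrimes_sup (K := K) hq
  have htq : natTrdeg K (A ⧸ p) = 1 + natTrdeg K (A ⧸ q) := by lia
  have hheight : p.height + 1 ≤ q.height :=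
    Order.add_one_le_of_lt (Ideal.height_strict_mono_of_isPrime hpq)
  calc p.height + natTrdeg K (A ⧸ p) = p.height + 1 + natTrdeg K (A ⧸ q) := by
        rw [htq, Nat.cast_add, Nat.cast_one, add_assoc]
    _ ≤ q.height + natTrdeg K (A ⧸ q) := by gcongr
    _ ≤ M.height := ih _ (by lia) hqM rfl

end TranscendenceDegree

section RegularLocalRing

open IsLocalRing

variable {R : Type*} [CommRing R]

theorem exists_notMem_sq_notMem_minimalPrimes [IsLocalRing R] [IsNoetherianRing R]
    (hR : maximalIdeal R ∉ minimalPrimes R) :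
    ∃ x ∈ maximalIdeal R, x ∉ maximalIdeal R ^ 2 ∧ ∀ p ∈ minimalPrimes R, x ∉ p := by
  set m := maximalIdeal R with hm
  have hsq : ¬ m ≤ m ^ 2 := fun hle => by
    have hbot : m = ⊥ := Submodule.eq_bot_of_le_smul_of_le_jacobson_bot m m
      (IsNoetherian.noetherian _) (by simpa [pow_two] using hle) (maximalIdeal_le_jacobson _)
    have hprime := hm ▸ (maximalIdeal.isMaximal R).isPrime
    exact hR ⟨⟨hprime, bot_le⟩, fun p _ _ => hbot ▸ bot_le⟩
  have hmin : ∀ p ∈ minimalPrimes R, ¬ m ≤ p := fun p hp hle =>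
    by
    obtain rfl : p = m := (le_maximalIdeal hp.1.1.ne_top).antisymm hle
    exact hR hp
  by_contra! hcon
  have hfin : (insert (m ^ 2) (minimalPrimes R)).Finite :=
    (minimalPrimes.finite_of_isNoetherianRing R).insert _
  obtain ⟨i, rfl | hi, hle⟩ := (Ideal.subset_union_prime_finite hfin (f := id) (m ^ 2) (m ^ 2)
      (I := m) fun i hi h _ => (hi.resolve_left h).1.1).mp fun x hx => by
    simp only [Set.mem_iUnion, id]
    by_cases hx2 : x ∈ m ^ 2
    · exact ⟨m ^ 2, Set.mem_insert _ _, hx2⟩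
    · obtain ⟨p, hp, hxp⟩ := hcon x hx hx2
      exact ⟨p, Set.mem_insert_of_mem _ hp, hxp⟩
  · exact hsq hle
  · exact hmin i hi hle

theorem exists_isUnit_coeff_of_sum_notMem_sq [IsLocalRing R] {s : Finset R}
    (hs : ∀ y ∈ s, y ∈ maximalIdeal R) {c : R → R} (hc : ∑ y ∈ s, c y * y ∉ maximalIdeal R ^ 2) :
    ∃ y ∈ s, IsUnit (c y) := by
  by_contra! hcon
  rw [pow_two] at hc
  exact hc (Ideal.sum_mem _ fun y hy =>
    Ideal.mul_mem_mul ((mem_maximalIdeal _).mpr (hcon y hy)) (hs y hy))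

theorem spanFinrank_map_maximalIdeal_quotient_lt [IsLocalRing R] [IsNoetherianRing R] {x : R}
    (hx : x ∈ maximalIdeal R) (hx2 : x ∉ maximalIdeal R ^ 2) :
    ((maximalIdeal R).map (Ideal.Quotient.mk (Ideal.span {x}))).spanFinrank <
      (maximalIdeal R).spanFinrank := by
  classical
  set m := maximalIdeal R
  set π := Ideal.Quotient.mk (Ideal.span {x})
  obtain ⟨s, hcard, hs : Ideal.span (s : Set R) = m⟩ :=
    Submodule.FG.exists_span_finset_card_eq_spanFinrank (IsNoetherian.noetherian m)
  have hgen : ∀ y ∈ s, y ∈ m := fun y hy => hs ▸ Ideal.subset_span hy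
  obtain ⟨c, -, hc⟩ := Submodule.mem_span_finset.mp (hs.symm ▸ hx)
  simp only [smul_eq_mul] at hc
  obtain ⟨y, hy, hunit⟩ := exists_isUnit_coeff_of_sum_notMem_sq hgen (hc.symm ▸ hx2)
  have hspan : m.map π = Ideal.span ((s.erase y).image π : Finset (R ⧸ Ideal.span {x})) := by
    rw [← hs, Ideal.map_span, Finset.coe_image]
    refine le_antisymm (Ideal.span_le.mpr ?_)
      (Ideal.span_mono (Set.image_mono (Finset.erase_subset y s)))
    rintro _ ⟨z, hz, rfl⟩
    obtain rfl | hzy := eq_or_ne z y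
    · have hsum : π (c z) * π z + ∑ w ∈ s.erase z, π (c w) * π w = 0 := by
        have hπx : π x = 0 := Ideal.Quotient.eq_zero_iff_mem.mpr (Ideal.mem_span_singleton_self x)
        have hπc := congrArg π hc
        rw [hπx, ← Finset.add_sum_erase s _ hy, map_add, map_sum] at hπc
        simpa only [map_mul] using hπc
      rw [SetLike.mem_coe, ← Ideal.unit_mul_mem_iff_mem _ (hunit.map π),
        eq_neg_of_add_eq_zero_left hsum, neg_mem_iff]
      exact Ideal.sum_mem _ fun w hw =>
        Ideal.mul_mem_left _ _ (Ideal.subset_span (Set.mem_image_of_mem π hw))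
    · exact Ideal.subset_span (Set.mem_image_of_mem π (Finset.mem_erase.mpr ⟨hzy, hz⟩))
  calc (m.map π).spanFinrank ≤ ((s.erase y).image π).card := by
        rw [hspan, ← Set.ncard_coe_finset]
        exact Submodule.spanFinrank_span_le_ncard_of_finite (Finset.finite_toSet _)
    _ ≤ (s.erase y).card := Finset.card_image_le
    _ < m.spanFinrank := hcard ▸ Finset.card_erase_lt_of_mem hy

theorem isRegularLocalRing_quotient_span_singleton [IsRegularLocalRing R] {x : R}
    (hx : x ∈ maximalIdeal R) (hx2 : x ∉ maximalIdeal R ^ 2) :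
    IsRegularLocalRing (R ⧸ Ideal.span {x}) := by
  set π := Ideal.Quotient.mk (Ideal.span {x})
  have hle : Ideal.span {x} ≤ maximalIdeal R := (Ideal.span_singleton_le_iff_mem _).mpr hx
  have : Nontrivial (R ⧸ Ideal.span {x}) :=
    Ideal.Quotient.nontrivial_iff.mpr (ne_top_of_le_ne_top Ideal.IsPrime.ne_top' hle)
  have : IsLocalRing (R ⧸ Ideal.span {x}) :=
    IsLocalRing.of_surjective' π Ideal.Quotient.mk_surjective
  have hlt := spanFinrank_map_maximalIdeal_quotient_lt hx hx2
  rw [map_maximalIdeal_of_surjective π Ideal.Quotient.mk_surjective] at hlt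
  have hdim := Ideal.height_le_ringKrullDim_quotient_add_one hx
  rw [maximalIdeal_height_eq_ringKrullDim,
    ← IsRegularLocalRing.spanFinrank_maximalIdeal (R := R)] at hdim
  refine IsRegularLocalRing.of_spanFinrank_maximalIdeal_le _ ?_
  exact ENat.WithBot.add_le_add_one_right_iff.mp (le_trans (mod_cast hlt) hdim)

theorem isDomain_of_isPrime_span_singleton [IsLocalRing R] [IsNoetherianRing R] {x : R}
    (hx : x ∈ maximalIdeal R) (hprime : (Ideal.span {x}).IsPrime)
    (hmin : ∀ p ∈ minimalPrimes R, x ∉ p) : IsDomain R := by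
  -- A minimal prime `p ⊆ (x)` satisfies `p = x p`, so it vanishes by Nakayama's lemma.
  obtain ⟨p, hp, hpx⟩ := Ideal.exists_minimalPrimes_le (I := ⊥) (J := Ideal.span {x}) bot_le
  have hpp : p.IsPrime := hp.1.1
  have hbot : p = ⊥ := by
    refine Submodule.eq_bot_of_le_smul_of_le_jacobson_bot (maximalIdeal R) p
      (IsNoetherian.noetherian _) (fun y hy => ?_) (maximalIdeal_le_jacobson _)
    obtain ⟨z, rfl⟩ := Ideal.mem_span_singleton.mp (hpx hy)
    exact Ideal.mul_mem_mul hx ((hpp.mem_or_mem hy).resolve_left (hmin p hp))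
  rw [hbot] at hpp
  exact IsDomain.of_bot_isPrime R

theorem isDomain_of_isRegularLocalRing (R : Type*) [CommRing R] [IsRegularLocalRing R] :
    IsDomain R := by
  obtain ⟨r, hr⟩ : ∃ r, (maximalIdeal R).spanFinrank = r := ⟨_, rfl⟩
  induction r using Nat.strong_induction_on generalizing R with
  | _ r ih =>
  by_cases hmin : maximalIdeal R ∈ minimalPrimes R
  · have hdim := IsRegularLocalRing.spanFinrank_maximalIdeal (R := R)
    rw [← maximalIdeal_height_eq_ringKrullDim, Ideal.height_eq_zero_iff.mpr hmin] at hdim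
    have hfg := IsNoetherian.noetherian (maximalIdeal R)
    have hbot := (Submodule.spanFinrank_eq_zero_iff_eq_bot hfg).mp (mod_cast hdim)
    exact (isField_iff_maximalIdeal_eq.mpr hbot).isDomain
  obtain ⟨x, hx, hx2, hxmin⟩ := exists_notMem_sq_notMem_minimalPrimes hmin
  have hreg := isRegularLocalRing_quotient_span_singleton hx hx2
  have hlt := spanFinrank_map_maximalIdeal_quotient_lt hx hx2
  rw [map_maximalIdeal_of_surjective _ Ideal.Quotient.mk_surjective, hr] at hlt
  have hdom := ih _ hlt (R ⧸ Ideal.span {x}) rfl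
  exact isDomain_of_isPrime_span_singleton hx ((Ideal.Quotient.isDomain_iff_prime _).mp hdom) hxmin

end RegularLocalRing

section HomogeneousIdeals

attribute [local instance] MvPolynomial.gradedAlgebra

theorem isHomogeneous_pow {ι A σ : Type*} [CommSemiring A] [DecidableEq ι] [AddMonoid ι]
    [SetLike σ A] [AddSubmonoidClass σ A] {𝒜 : ι → σ} [GradedRing 𝒜] {I : Ideal A}
    (hI : I.IsHomogeneous 𝒜) (m : ℕ) : (I ^ m).IsHomogeneous 𝒜 := by
  induction m with
  | zero => simpa only [pow_zero, Ideal.one_eq_top] using Ideal.IsHomogeneous.top 𝒜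
  | succ m ih => exact pow_succ I m ▸ ih.mul hI

theorem isHomogeneous_of_mem_minimalPrimes {ι A σ : Type*} [CommRing A]
    [AddCommMonoid ι] [LinearOrder ι] [IsOrderedCancelAddMonoid ι]
    [SetLike σ A] [AddSubmonoidClass σ A] {𝒜 : ι → σ} [GradedRing 𝒜] {I q : Ideal A}
    (hI : I.IsHomogeneous 𝒜) (hq : q ∈ I.minimalPrimes) : q.IsHomogeneous 𝒜 := by
  have hcore_prime : (q.homogeneousCore 𝒜).toIdeal.IsPrime := hq.1.1.homogeneousCore
  have hI_le : I ≤ (q.homogeneousCore 𝒜).toIdeal :=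
    hI.toIdeal_homogeneousCore_eq_self ▸ Ideal.homogeneousCore_mono 𝒜 hq.1.2
  have hcore_le := q.toIdeal_homogeneousCore_le 𝒜
  exact Ideal.IsHomogeneous.iff_eq 𝒜 q |>.2
    (hcore_le.antisymm (hq.2 ⟨hcore_prime, hI_le⟩ hcore_le))

variable {σ R K : Type*} [CommRing R] [Field K]

theorem isHomogeneous_iff_homogeneousComponent_mem {I : Ideal (MvPolynomial σ R)} :
    I.IsHomogeneous (homogeneousSubmodule σ R) ↔ ∀ f ∈ I, ∀ i, homogeneousComponent i f ∈ I := by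
  simp_rw [← decomposition.decompose'_apply]
  exact forall_comm.trans (forall_congr' fun f => forall_comm)

theorem isHomogeneous_sup_span_singleton {I : Ideal (MvPolynomial σ R)}
    (hI : I.IsHomogeneous (homogeneousSubmodule σ R)) {f : MvPolynomial σ R} {a : ℕ}
    (hf : f.IsHomogeneous a) :
    (I ⊔ Ideal.span {f}).IsHomogeneous (homogeneousSubmodule σ R) :=
  hI.sup (Ideal.homogeneous_span _ _ fun _ hg => ⟨a, (Set.mem_singleton_iff.1 hg) ▸ hf⟩)

theorem eval_smul_of_isHomogeneous {f : MvPolynomial σ R} {a : ℕ} (hf : f.IsHomogeneous a)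
    (c : R) (v : σ → R) : eval (c • v) f = c ^ a * eval v f := by
  simp only [eval_eq, Finset.mul_sum, Pi.smul_apply, smul_eq_mul, mul_pow,
    Finset.prod_mul_distrib, Finset.prod_pow_eq_pow_sum]
  refine Finset.sum_congr rfl fun d hd => ?_
  rw [← hf.degree_eq_sum_deg_support hd, mul_left_comm]

theorem eval_homogeneousComponent_eq_zero [Infinite K] {f : MvPolynomial σ K} {v : σ → K}
    (h : ∀ c : K, c ≠ 0 → eval (c • v) f = 0) (i : ℕ) :
    eval v (homogeneousComponent i f) = 0 := by
  let P : Polynomial K := ∑ i ∈ Finset.range (f.totalDegree + 1),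
    Polynomial.monomial i (eval v (homogeneousComponent i f))
  have hP_eval (c : K) : P.eval c = eval (c • v) f := by
    conv_rhs => rw [← sum_homogeneousComponent f, map_sum]
    simp only [P, Polynomial.eval_finsetSum, Polynomial.eval_monomial,
      eval_smul_of_isHomogeneous (homogeneousComponent_isHomogeneous _ f), mul_comm]
  have hP : P = 0 := Polynomial.eq_zero_of_infinite_isRoot _ <|
    (Set.finite_singleton (0 : K)).infinite_compl.mono fun c hc => (hP_eval c).trans (h c hc)
  by_cases hi : i ∈ Finset.range (f.totalDegree + 1)
  · simpa only [P, Polynomial.finsetSum_coeff, Polynomial.coeff_monomial, Polynomial.coeff_zero,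
      Finset.sum_ite_eq', hi, if_true] using congrArg (Polynomial.coeff · i) hP
  · rw [homogeneousComponent_eq_zero _ _ (by simpa using hi), map_zero]

theorem mem_idealOfVars_iff_eval_zero {f : MvPolynomial σ R} :
    f ∈ idealOfVars σ R ↔ eval 0 f = 0 := by
  rw [← pow_one (idealOfVars σ R), mem_pow_idealOfVars_iff', eval_zero, constantCoeff_eq]
  simp [Finsupp.degree_eq_zero_iff]

theorem idealOfVars_le_iff {I : Ideal (MvPolynomial σ R)} :
    idealOfVars σ R ≤ I ↔ ∀ i, X i ∈ I := by
  rw [idealOfVars, Ideal.span_le, Set.range_subset_iff]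
  rfl

instance isMaximal_ker_eval (v : σ → K) : (RingHom.ker (eval v)).IsMaximal :=
  RingHom.ker_isMaximal_of_surjective _ fun c => ⟨C c, eval_C c⟩

theorem idealOfVars_eq_ker_eval_zero : idealOfVars σ R = RingHom.ker (eval (0 : σ → R)) :=
  Ideal.ext fun _ => mem_idealOfVars_iff_eval_zero

instance isMaximal_idealOfVars : (idealOfVars σ K).IsMaximal :=
  idealOfVars_eq_ker_eval_zero (σ := σ) (R := K) ▸ isMaximal_ker_eval 0

theorem le_idealOfVars_of_isHomogeneous {I : Ideal (MvPolynomial σ K)}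
    (hI : I.IsHomogeneous (homogeneousSubmodule σ K)) (hne : I ≠ ⊤) : I ≤ idealOfVars σ K := by
  intro f hf
  have hC : C (coeff 0 f) ∈ I :=
    homogeneousComponent_zero f ▸ isHomogeneous_iff_homogeneousComponent_mem.1 hI f hf 0
  rw [mem_idealOfVars_iff_eval_zero, eval_zero, constantCoeff_eq]
  by_contra hc
  exact hne (I.eq_top_of_isUnit_mem hC ((isUnit_iff_ne_zero.2 hc).map C))

theorem mem_pow_idealOfVars_of_isHomogeneous {f : MvPolynomial σ R} {D M : ℕ}
    (hf : f.IsHomogeneous D) (h : M ≤ D) : f ∈ idealOfVars σ R ^ M :=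
  (mem_pow_idealOfVars_iff M f).2 fun _ hx => h.trans (hf.degree_eq_sum_deg_support hx).le

theorem natTrdeg_quotient_idealOfVars [Finite σ] :
    natTrdeg K (MvPolynomial σ K ⧸ idealOfVars σ K) = 0 :=
  natTrdeg_quotient_eq_zero_of_isMaximal _

end HomogeneousIdeals

section VanishingIdeal

attribute [local instance] MvPolynomial.gradedAlgebra

variable {S T : Set (ProjPt k n)}

/-- The ideal of all polynomials, homogeneous or not, vanishing on the affine cone over `S`. -/
def projVanishingIdeal (S : Set (ProjPt k n)) : Ideal (MvPolynomial (Fin (n + 1)) k) where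
  carrier := {f | ∀ (v : Fin (n + 1) → k) (hv : v ≠ 0),
    Projectivization.mk k v hv ∈ S → eval v f = 0}
  add_mem' hf hg v hv hS := by rw [map_add, hf v hv hS, hg v hv hS, add_zero]
  zero_mem' _ _ _ := map_zero _
  smul_mem' c f hf v hv hS := by rw [smul_eq_mul, map_mul, hf v hv hS, mul_zero]

/-- The closed subset of projective space cut out by the homogeneous elements of an ideal. -/
def projZerosOfIdeal (I : Ideal (MvPolynomial (Fin (n + 1)) k)) : Set (ProjPt k n) :=
  projZeroLocus {f | f ∈ I ∧ ∃ m : ℕ, f.IsHomogeneous m}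

theorem isHomogeneous_projVanishingIdeal [Infinite k] (S : Set (ProjPt k n)) :
    (projVanishingIdeal S).IsHomogeneous (homogeneousSubmodule (Fin (n + 1)) k) := by
  refine isHomogeneous_iff_homogeneousComponent_mem.2 fun f hf i v hv hS =>
    eval_homogeneousComponent_eq_zero (fun c hc => hf _ (smul_ne_zero hc hv) ?_) i
  rwa [(Projectivization.mk_eq_mk_iff' k _ _ _ hv).2 ⟨c, rfl⟩]

theorem projVanishingIdeal_anti (h : S ⊆ T) : projVanishingIdeal T ≤ projVanishingIdeal S :=
  fun _ hf v hv hS => hf v hv (h hS)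

theorem vanishesAt_mk_iff {f : MvPolynomial (Fin (n + 1)) k} {a : ℕ} (hf : f.IsHomogeneous a)
    {v : Fin (n + 1) → k} (hv : v ≠ 0) :
    VanishesAt f (Projectivization.mk k v hv) ↔ eval v f = 0 := by
  refine ⟨fun h => h v hv rfl, fun h w hw hwv => ?_⟩
  obtain ⟨c, rfl⟩ := (Projectivization.mk_eq_mk_iff' k _ _ _ _).1 hwv
  rw [eval_smul_of_isHomogeneous hf, h, mul_zero]

theorem isClosedSub_projZeroLocus_singleton {f : MvPolynomial (Fin (n + 1)) k} {a : ℕ}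
    (hf : f.IsHomogeneous a) : IsClosedSub (projZeroLocus {f}) :=
  ⟨{f}, fun _ hg => ⟨a, Set.mem_singleton_iff.1 hg ▸ hf⟩, rfl⟩

theorem mk_mem_projZeroLocus_singleton_iff {f : MvPolynomial (Fin (n + 1)) k} {a : ℕ}
    (hf : f.IsHomogeneous a) {v : Fin (n + 1) → k} (hv : v ≠ 0) :
    Projectivization.mk k v hv ∈ projZeroLocus {f} ↔ eval v f = 0 :=
  (forall_eq (p := (VanishesAt · _))).trans (vanishesAt_mk_iff hf hv)

theorem IsClosedSub.inter (hS : IsClosedSub S) (hT : IsClosedSub T) : IsClosedSub (S ∩ T) := by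
  obtain ⟨I, hI, rfl⟩ := hS
  obtain ⟨J, hJ, rfl⟩ := hT
  exact ⟨I ∪ J, fun f => Or.rec (hI f) (hJ f), Set.ext fun x => Set.union_subset_iff.symm⟩

theorem mk_mem_iff_of_isClosedSub (hS : IsClosedSub S) {v : Fin (n + 1) → k} (hv : v ≠ 0) :
    Projectivization.mk k v hv ∈ S ↔ ∀ f ∈ projVanishingIdeal S, eval v f = 0 := by
  refine ⟨fun h f hf => hf v hv h, fun h => ?_⟩
  obtain ⟨I, hI, rfl⟩ := hS
  intro f hf
  obtain ⟨m, hm⟩ := hI f hf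
  exact (vanishesAt_mk_iff hm hv).2 (h f fun w hw hwS => hwS f hf w hw rfl)

theorem subset_of_projVanishingIdeal_le (hT : IsClosedSub T)
    (h : projVanishingIdeal T ≤ projVanishingIdeal S) : S ⊆ T := by
  rintro ⟨v, hv⟩ hx
  exact (mk_mem_iff_of_isClosedSub hT hv).2 fun f hf => h hf v hv hx

theorem projVanishingIdeal_ne_top (hS : S.Nonempty) : projVanishingIdeal S ≠ ⊤ := by
  obtain ⟨⟨v, hv⟩, hx⟩ := hS
  intro h
  exact one_ne_zero ((map_one (eval v)).symm.trans ((Ideal.eq_top_iff_one _).1 h v hv hx))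

theorem not_idealOfVars_le_projVanishingIdeal (hS : S.Nonempty) :
    ¬ idealOfVars (Fin (n + 1)) k ≤ projVanishingIdeal S := by
  obtain ⟨⟨v, hv⟩, hx⟩ := hS
  refine fun h => hv (funext fun i => ?_)
  have hX : X i ∈ projVanishingIdeal S := idealOfVars_le_iff.1 h i
  simpa only [eval_X, Pi.zero_apply] using hX v hv hx

theorem projVanishingIdeal_lt_idealOfVars [Infinite k] (hS : S.Nonempty) :
    projVanishingIdeal S < idealOfVars (Fin (n + 1)) k :=
  lt_of_le_not_ge (le_idealOfVars_of_isHomogeneous (isHomogeneous_projVanishingIdeal S)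
    (projVanishingIdeal_ne_top hS)) (not_idealOfVars_le_projVanishingIdeal hS)

theorem isPrime_projVanishingIdeal [Infinite k] (hS : IsIrredSub S) :
    (projVanishingIdeal S).IsPrime := by
  refine (isHomogeneous_projVanishingIdeal S).isPrime_of_homogeneous_mem_or_mem
    (projVanishingIdeal_ne_top hS.1) ?_
  rintro f g ⟨a, hf⟩ ⟨b, hg⟩ hfg
  have hmem {f : MvPolynomial (Fin (n + 1)) k} (h : S ⊆ projZeroLocus {f}) :
      f ∈ projVanishingIdeal S := fun v hv hvS => h hvS f rfl v hv rfl
  refine (hS.2 _ _ (isClosedSub_projZeroLocus_singleton hf)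
    (isClosedSub_projZeroLocus_singleton hg) ?_).imp hmem hmem
  rintro ⟨v, hv⟩ hx
  have hmul := hfg v hv hx
  rw [map_mul, mul_eq_zero] at hmul
  exact hmul.imp (mk_mem_projZeroLocus_singleton_iff hf hv).2
    (mk_mem_projZeroLocus_singleton_iff hg hv).2

theorem isIrredSub_of_isPrime_projVanishingIdeal (hS : (projVanishingIdeal S).IsPrime) :
    IsIrredSub S := by
  refine ⟨Set.nonempty_iff_ne_empty.2 ?_, ?_⟩
  · rintro rfl
    exact hS.ne_top ((Ideal.eq_top_iff_one _).2 fun _ _ => False.elim)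
  · rintro _ _ ⟨I, -, rfl⟩ ⟨J, -, rfl⟩ hsub
    have hex {I : Set (MvPolynomial (Fin (n + 1)) k)} (h : ¬ S ⊆ projZeroLocus I) :
        ∃ f ∈ I, f ∉ projVanishingIdeal S := by
      by_contra! hI
      exact h fun x hx f hf w hw hwx => hI f hf w hw (hwx ▸ hx)
    by_contra! hcon
    obtain ⟨f, hfI, hf⟩ := hex hcon.1
    obtain ⟨g, hgJ, hg⟩ := hex hcon.2
    refine (hS.mem_or_mem (x := f) (y := g) fun v hv hx => ?_).elim hf hg
    rw [map_mul, mul_eq_zero]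
    exact (hsub hx).imp (fun h => h f hfI v hv rfl) fun h => h g hgJ v hv rfl

theorem isClosedSub_projZerosOfIdeal (I : Ideal (MvPolynomial (Fin (n + 1)) k)) :
    IsClosedSub (projZerosOfIdeal I) :=
  ⟨_, fun _ h => h.2, rfl⟩

theorem mk_mem_projZerosOfIdeal_iff {I : Ideal (MvPolynomial (Fin (n + 1)) k)}
    (hI : I.IsHomogeneous (homogeneousSubmodule (Fin (n + 1)) k))
    {v : Fin (n + 1) → k} (hv : v ≠ 0) :
    Projectivization.mk k v hv ∈ projZerosOfIdeal I ↔ ∀ f ∈ I, eval v f = 0 := by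
  refine ⟨fun h f hf => ?_, fun h f hf => (vanishesAt_mk_iff hf.2.choose_spec hv).2 (h f hf.1)⟩
  rw [← sum_homogeneousComponent f, map_sum]
  exact Finset.sum_eq_zero fun i _ =>
    h _ ⟨isHomogeneous_iff_homogeneousComponent_mem.1 hI f hf i, i,
      homogeneousComponent_isHomogeneous i f⟩ v hv rfl

theorem projVanishingIdeal_projZerosOfIdeal [IsAlgClosed k]
    {q : Ideal (MvPolynomial (Fin (n + 1)) k)} [q.IsPrime]
    (hq : q.IsHomogeneous (homogeneousSubmodule (Fin (n + 1)) k))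
    (hirr : ¬ idealOfVars (Fin (n + 1)) k ≤ q) :
    projVanishingIdeal (projZerosOfIdeal q) = q := by
  refine le_antisymm (fun f hf => ?_)
    fun f hf v hv hx => (mk_mem_projZerosOfIdeal_iff hq hv).1 hx f hf
  rw [idealOfVars_le_iff, not_forall] at hirr
  obtain ⟨j, hj⟩ := hirr
  -- `f` need not vanish at the vertex of the affine cone over the zero locus, but `X j * f` does.
  have hXf : X j * f ∈ q := by
    rw [← IsPrime.vanishingIdeal_zeroLocus (K := k) q, mem_vanishingIdeal_iff]
    intro v hv
    rw [aeval_eq_eval]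
    rcases eq_or_ne v 0 with rfl | hv0
    · simp
    · rw [map_mul, hf v hv0 ((mk_mem_projZerosOfIdeal_iff hq hv0).2
        fun g hg => (mem_zeroLocus_iff.1 hv) g hg), mul_zero]
  exact (Ideal.IsPrime.mem_or_mem ‹_› hXf).resolve_left hj

theorem IsClosedIrredIn.isClosedSub (h : IsClosedIrredIn S T) (hS : IsClosedSub S) :
    IsClosedSub T := by
  obtain ⟨-, ⟨C, hC, rfl⟩, -⟩ := h
  exact hC.inter hS

theorem IsIrredSub.isClosedIrredIn (hirr : IsIrredSub T) (hT : IsClosedSub T) (h : T ⊆ S) :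
    IsClosedIrredIn S T :=
  ⟨h, ⟨T, hT, (Set.inter_eq_left.2 h).symm⟩, hirr⟩

theorem DimGE.mono {m e : ℕ} (h : DimGE S e) (hm : m ≤ e) : DimGE S m := by
  obtain ⟨c, hc, hcS⟩ := h
  exact ⟨c ∘ Fin.castLE (by lia), hc.comp (Fin.strictMono_castLE _), fun i => hcS _⟩

theorem DimGE.succ_of_ssubset {m : ℕ} (h : DimGE T m) (hT : IsClosedSub T) (hTS : T ⊂ S)
    (hS : IsClosedSub S) (hirr : IsIrredSub S) : DimGE S (m + 1) := by
  obtain ⟨c, hc, hcT⟩ := h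
  refine ⟨Fin.snoc (α := fun _ => Set (ProjPt k n)) c S, Fin.strictMono_iff_lt_succ.2 ?_, ?_⟩
  · refine Fin.lastCases ?_ fun i => ?_
    · rw [Fin.succ_last, Fin.snoc_last, Fin.snoc_castSucc]
      exact (hcT _).1.trans_ssubset hTS
    · rw [Fin.succ_castSucc, Fin.snoc_castSucc, Fin.snoc_castSucc]
      exact hc Fin.castSucc_lt_succ
  · refine Fin.lastCases ?_ fun i => ?_
    · rw [Fin.snoc_last]
      exact hirr.isClosedIrredIn hS subset_rfl
    · rw [Fin.snoc_castSucc]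
      exact (hcT i).2.2.isClosedIrredIn ((hcT i).isClosedSub hT) ((hcT i).1.trans hTS.subset)

theorem DimGE.add_one_le_natTrdeg [Infinite k] {m : ℕ} (h : DimGE S m) (hS : IsClosedSub S) :
    m + 1 ≤ natTrdeg k (MvPolynomial (Fin (n + 1)) k ⧸ projVanishingIdeal S) := by
  obtain ⟨c, hc, hcS⟩ := h
  have hprime (i) := isPrime_projVanishingIdeal (hcS i).2.2
  have hmono : StrictMono fun i =>
      natTrdeg k (MvPolynomial (Fin (n + 1)) k ⧸ projVanishingIdeal (c i)) := fun i j hij =>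
    natTrdeg_quotient_lt_of_lt (lt_of_le_of_ne (projVanishingIdeal_anti (hc hij).le) fun h =>
      (hc hij).not_subset (subset_of_projVanishingIdeal_le ((hcS i).isClosedSub hS) h.ge))
  have hpos : 0 < natTrdeg k (MvPolynomial (Fin (n + 1)) k ⧸ projVanishingIdeal (c 0)) :=
    (natTrdeg_quotient_lt_of_lt (projVanishingIdeal_lt_idealOfVars (hcS 0).2.2.1)).pos
  have hlast (i : Fin (m + 1)) : i + 1 ≤
      natTrdeg k (MvPolynomial (Fin (n + 1)) k ⧸ projVanishingIdeal (c i)) := by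
    induction i using Fin.induction with
    | zero => exact hpos
    | succ i ih => exact Nat.succ_le_of_lt (ih.trans_lt (hmono Fin.castSucc_lt_succ))
  exact (hlast (Fin.last m)).trans (natTrdeg_quotient_le_of_le (projVanishingIdeal_anti (hcS _).1))

theorem exists_ssubset_natTrdeg_eq_add_one [IsAlgClosed k] (hS : IsClosedSub S)
    (hirr : IsIrredSub S)
    (hdim : 2 ≤ natTrdeg k (MvPolynomial (Fin (n + 1)) k ⧸ projVanishingIdeal S)) :
    ∃ T ⊂ S, IsClosedSub T ∧ IsIrredSub T ∧
      natTrdeg k (MvPolynomial (Fin (n + 1)) k ⧸ projVanishingIdeal S) =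
        natTrdeg k (MvPolynomial (Fin (n + 1)) k ⧸ projVanishingIdeal T) + 1 := by
  have hprime := isPrime_projVanishingIdeal hirr
  obtain ⟨j, hj⟩ : ∃ j, X j ∉ projVanishingIdeal S := by
    simpa only [idealOfVars_le_iff, not_forall] using
      not_idealOfVars_le_projVanishingIdeal hirr.1
  obtain ⟨q, hq, hqm⟩ := Ideal.exists_minimalPrimes_le
    (sup_le (projVanishingIdeal_lt_idealOfVars hirr.1).le
      ((Ideal.span_singleton_le_iff_mem _).2 (idealOfVars_le_iff.1 le_rfl j)))
  have hqprime := hq.1.1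
  have htr := natTrdeg_quotient_eq_add_one_of_mem_minimalPrimes_sup (K := k) hj hq
  have hqhom := isHomogeneous_of_mem_minimalPrimes
    (isHomogeneous_sup_span_singleton (isHomogeneous_projVanishingIdeal S)
      (isHomogeneous_X k j)) hq
  have hqirr : ¬ idealOfVars (Fin (n + 1)) k ≤ q := fun h => by
    rw [hqm.antisymm h, natTrdeg_quotient_idealOfVars] at htr
    lia
  have hIq := projVanishingIdeal_projZerosOfIdeal hqhom hqirr
  have hjq : X j ∈ q := hq.1.2 (Ideal.mem_sup_right (Ideal.mem_span_singleton_self _))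
  refine ⟨projZerosOfIdeal q, ⟨subset_of_projVanishingIdeal_le hS ?_, fun h => hj ?_⟩,
    isClosedSub_projZerosOfIdeal q, isIrredSub_of_isPrime_projVanishingIdeal ?_, ?_⟩
  · exact hIq.symm ▸ le_sup_left.trans hq.1.2
  · exact projVanishingIdeal_anti h (hIq.symm ▸ hjq)
  · exact hIq.symm ▸ hqprime
  · exact hIq.symm ▸ htr

theorem dimGE_of_natTrdeg_eq_add_one [IsAlgClosed k] {m : ℕ} (hS : IsClosedSub S)
    (hirr : IsIrredSub S)
    (hdim : natTrdeg k (MvPolynomial (Fin (n + 1)) k ⧸ projVanishingIdeal S) = m + 1) :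
    DimGE S m := by
  induction m generalizing S with
  | zero =>
    exact ⟨fun _ => S, Subsingleton.strictMono (α := Fin 1) _,
      fun _ => hirr.isClosedIrredIn hS subset_rfl⟩
  | succ m ih =>
    obtain ⟨T, hTS, hT, hTirr, htr⟩ := exists_ssubset_natTrdeg_eq_add_one hS hirr (by lia)
    exact (ih hT hTirr (by lia)).succ_of_ssubset hT hTS hS hirr

theorem hasDim_iff_natTrdeg_eq [IsAlgClosed k] {d : ℕ} (hS : IsClosedSub S)
    (hirr : IsIrredSub S) :
    HasDim S d ↔
      natTrdeg k (MvPolynomial (Fin (n + 1)) k ⧸ projVanishingIdeal S) = d + 1 := by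
  refine ⟨fun h => ?_, fun h => ⟨dimGE_of_natTrdeg_eq_add_one hS hirr h, fun h' => ?_⟩⟩
  · have hle := h.1.add_one_le_natTrdeg hS
    by_contra hne
    obtain ⟨e, he⟩ := Nat.exists_eq_add_of_le hle
    exact h.2 ((dimGE_of_natTrdeg_eq_add_one (m := d + e) hS hirr (by lia)).mono (by lia))
  · have := h'.add_one_le_natTrdeg hS
    lia

end VanishingIdeal

section Parameters

attribute [local instance] MvPolynomial.gradedAlgebra

variable {σ K : Type*} [Field K]

theorem exists_isHomogeneous_one_forall_notMem [Infinite K]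
    {s : Set (Ideal (MvPolynomial σ K))} (hs : s.Finite)
    (h : ∀ q ∈ s, ¬ idealOfVars σ K ≤ q) :
    ∃ l : MvPolynomial σ K, l.IsHomogeneous 1 ∧ ∀ q ∈ s, l ∉ q := by
  have : Finite s := hs
  by_contra! hcon
  let p (q : s) : Subspace K (homogeneousSubmodule σ K 1) :=
    (q.1.restrictScalars K).comap (homogeneousSubmodule σ K 1).subtype
  have hcover : ⋃ q, (p q : Set (homogeneousSubmodule σ K 1)) = Set.univ := by
    refine Set.eq_univ_iff_forall.2 fun l => ?_
    obtain ⟨q, hq, hl⟩ := hcon l l.2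
    exact Set.mem_iUnion.2 ⟨⟨q, hq⟩, hl⟩
  obtain ⟨q, hq⟩ := Subspace.exists_eq_top_of_iUnion_eq_univ hcover
  refine h q q.2 (idealOfVars_le_iff.2 fun i => ?_)
  exact (hq.ge trivial : (⟨X i, isHomogeneous_X K i⟩ : homogeneousSubmodule σ K 1) ∈ p q)

theorem exists_isHomogeneous_forall_notMem [Infinite K]
    {s : Set (Ideal (MvPolynomial σ K))} (hs : s.Finite) (hprime : ∀ q ∈ s, q.IsPrime)
    (h : ∀ q ∈ s, ¬ idealOfVars σ K ≤ q) (a : ℕ) :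
    ∃ l : MvPolynomial σ K, l.IsHomogeneous a ∧ ∀ q ∈ s, l ∉ q := by
  obtain ⟨l, hl, hlq⟩ := exists_isHomogeneous_one_forall_notMem hs h
  exact ⟨l ^ a, by simpa only [one_mul] using hl.pow a,
    fun q hq hmem => hlq q hq ((hprime q hq).mem_of_pow_mem a hmem)⟩

variable [Finite σ] {J : Ideal (MvPolynomial σ K)}

theorem exists_isHomogeneous_forall_minimalPrimes_notMem [Infinite K]
    (hJ : J.IsHomogeneous (homogeneousSubmodule σ K)) (a : ℕ) :
    ∃ l : MvPolynomial σ K, l.IsHomogeneous a ∧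
      ∀ q ∈ J.minimalPrimes, q ≠ idealOfVars σ K → l ∉ q := by
  have hle (q) (hq : q ∈ J.minimalPrimes) : q ≤ idealOfVars σ K :=
    le_idealOfVars_of_isHomogeneous (isHomogeneous_of_mem_minimalPrimes hJ hq) hq.1.1.ne_top
  obtain ⟨l, hl, hlq⟩ := exists_isHomogeneous_forall_notMem
    (s := J.minimalPrimes \ {idealOfVars σ K})
    (J.finite_minimalPrimes_of_isNoetherianRing.subset Set.sdiff_subset)
    (fun q hq => hq.1.1.1) (fun q hq h => hq.2 (le_antisymm (hle q hq.1) h)) a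
  exact ⟨l, hl, fun q hq hne => hlq q ⟨hq, hne⟩⟩

theorem natTrdeg_quotient_le_of_mem_minimalPrimes_sup {t : ℕ}
    (hdim : ∀ q ∈ J.minimalPrimes, natTrdeg K (MvPolynomial σ K ⧸ q) ≤ t + 1)
    {l : MvPolynomial σ K} (hl : ∀ q ∈ J.minimalPrimes, q ≠ idealOfVars σ K → l ∉ q)
    {q : Ideal (MvPolynomial σ K)} (hq : q ∈ (J ⊔ Ideal.span {l}).minimalPrimes) :
    natTrdeg K (MvPolynomial σ K ⧸ q) ≤ t := by
  have := hq.1.1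
  obtain ⟨p, hp, hpq⟩ := Ideal.exists_minimalPrimes_le (le_sup_left.trans hq.1.2)
  have := hp.1.1
  rcases eq_or_ne p (idealOfVars σ K) with rfl | hne
  · rw [← Ideal.IsMaximal.eq_of_le inferInstance hq.1.1.ne_top hpq, natTrdeg_quotient_idealOfVars]
    exact Nat.zero_le t
  · have hlq : l ∈ q := hq.1.2 (Ideal.mem_sup_right (Ideal.mem_span_singleton_self l))
    have hlt : p < q := lt_of_le_of_ne hpq fun h => hl p hp hne (h ▸ hlq)
    exact Nat.le_of_lt_succ ((natTrdeg_quotient_lt_of_lt hlt).trans_le (hdim p hp))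

theorem exists_isHomogeneous_parameters [Infinite K] {t : ℕ} (a : ℕ)
    (hJ : J.IsHomogeneous (homogeneousSubmodule σ K))
    (hdim : ∀ q ∈ J.minimalPrimes, natTrdeg K (MvPolynomial σ K ⧸ q) ≤ t) :
    ∃ l : Fin t → MvPolynomial σ K, (∀ i, (l i).IsHomogeneous a) ∧
      idealOfVars σ K ≤ (J ⊔ Ideal.span (Set.range l)).radical := by
  induction t generalizing J with
  | zero =>
    refine ⟨Fin.elim0, fun i => i.elim0, ?_⟩
    rw [Set.range_eq_empty, Ideal.span_empty, sup_bot_eq, ← Ideal.sInf_minimalPrimes]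
    refine le_sInf fun q hq => ?_
    by_contra hle
    have := hq.1.1
    have hlt := lt_of_le_not_ge (le_idealOfVars_of_isHomogeneous
      (isHomogeneous_of_mem_minimalPrimes hJ hq) hq.1.1.ne_top) hle
    exact Nat.not_lt_zero _ ((natTrdeg_quotient_lt_of_lt (K := K) hlt).trans_le (hdim q hq))
  | succ t ih =>
    obtain ⟨l₀, hl₀, hl₀J⟩ := exists_isHomogeneous_forall_minimalPrimes_notMem hJ a
    obtain ⟨l, hl, hrad⟩ := ih (isHomogeneous_sup_span_singleton hJ hl₀)
      fun q hq => natTrdeg_quotient_le_of_mem_minimalPrimes_sup hdim hl₀J hq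
    refine ⟨Fin.cons l₀ l, Fin.cases hl₀ hl, ?_⟩
    rwa [Fin.range_cons, Set.insert_eq, Ideal.span_union, ← sup_assoc]

theorem exists_isHomogeneous_parameters_cons [Infinite K] {I : Ideal (MvPolynomial σ K)}
    [I.IsPrime] (hI : I.IsHomogeneous (homogeneousSubmodule σ K)) {t : ℕ}
    (hdim : natTrdeg K (MvPolynomial σ K ⧸ I) = t + 2) {h : MvPolynomial σ K} {a : ℕ}
    (hh : h.IsHomogeneous a) (hhI : h ∉ I) :
    ∃ Y : Fin (t + 2) → MvPolynomial σ K, Y 0 = h ∧ (∀ i, (Y i).IsHomogeneous a) ∧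
      idealOfVars σ K ≤ (I ⊔ Ideal.span (Set.range Y)).radical ∧
      ∀ q ∈ (I ⊔ Ideal.span {h}).minimalPrimes, Y 1 ∉ q := by
  have hdim' (q) (hq : q ∈ (I ⊔ Ideal.span {h}).minimalPrimes) :
      natTrdeg K (MvPolynomial σ K ⧸ q) = t + 1 := by
    have := natTrdeg_quotient_eq_add_one_of_mem_minimalPrimes_sup (K := K) hhI hq
    lia
  have hhom := isHomogeneous_sup_span_singleton hI hh
  obtain ⟨l₀, hl₀, hl₀q⟩ := exists_isHomogeneous_forall_minimalPrimes_notMem hhom a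
  obtain ⟨l, hl, hrad⟩ := exists_isHomogeneous_parameters a
    (isHomogeneous_sup_span_singleton hhom hl₀) fun q hq =>
      natTrdeg_quotient_le_of_mem_minimalPrimes_sup (fun p hp => (hdim' p hp).le) hl₀q hq
  refine ⟨Fin.cons h (Fin.cons l₀ l), rfl, Fin.cases hh (Fin.cases hl₀ hl), ?_,
    fun q hq => hl₀q q hq ?_⟩
  · rwa [Fin.range_cons, Fin.range_cons, Set.insert_eq, Set.insert_eq, Ideal.span_union,
      Ideal.span_union, ← sup_assoc, ← sup_assoc]
  · rintro rfl
    have := hdim' _ hq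
    rw [natTrdeg_quotient_idealOfVars] at this
    lia

end Parameters

section GradedRepresentation

attribute [local instance] MvPolynomial.gradedAlgebra

variable {σ ι K : Type*} [Field K]

theorem homogeneousComponent_mul_of_isHomogeneous {f : MvPolynomial σ K} {a D : ℕ}
    (hf : f.IsHomogeneous a) (h : a ≤ D) (g : MvPolynomial σ K) :
    homogeneousComponent D (f * g) = f * homogeneousComponent (D - a) g := by
  simp_rw [← decomposition.decompose'_apply]
  exact DirectSum.coe_decompose_mul_of_left_mem_of_le (homogeneousSubmodule σ K) hf h

variable {I : Ideal (MvPolynomial σ K)} {Y : ι → MvPolynomial σ K} {a M : ℕ}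

theorem exists_mk_eq_sum_mk_mul [Fintype ι] (hI : I.IsHomogeneous (homogeneousSubmodule σ K))
    (hY : ∀ i, (Y i).IsHomogeneous a) {f : MvPolynomial σ K} {D : ℕ} (hf : f.IsHomogeneous D)
    (haD : a ≤ D) (hmem : f ∈ I ⊔ Ideal.span (Set.range Y)) :
    ∃ c : ι → MvPolynomial σ K, (∀ i, (c i).IsHomogeneous (D - a)) ∧
      Ideal.Quotient.mk I f = ∑ i, Ideal.Quotient.mk I (Y i) * Ideal.Quotient.mk I (c i) := by
  obtain ⟨g, hg, s, hs, rfl⟩ := Submodule.mem_sup.1 hmem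
  obtain ⟨c, rfl⟩ := Ideal.mem_span_range_iff_exists_fun.1 hs
  refine ⟨fun i => homogeneousComponent (D - a) (c i),
    fun i => homogeneousComponent_isHomogeneous _ _, ?_⟩
  have hgD : Ideal.Quotient.mk I (homogeneousComponent D g) = 0 :=
    Ideal.Quotient.eq_zero_iff_mem.2 (isHomogeneous_iff_homogeneousComponent_mem.1 hI g hg D)
  rw [← homogeneousComponent_eq_self hf, map_add, map_add, hgD, zero_add, map_sum, map_sum]
  refine Finset.sum_congr rfl fun i _ => ?_
  rw [mul_comm, homogeneousComponent_mul_of_isHomogeneous (hY i) haD, map_mul]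

theorem exists_mk_eq_sum_aeval_mul [Finite ι] {G : Type*} [Fintype G] (ha : 0 < a)
    (hI : I.IsHomogeneous (homogeneousSubmodule σ K)) (hY : ∀ i, (Y i).IsHomogeneous a)
    (hM : idealOfVars σ K ^ M ≤ I ⊔ Ideal.span (Set.range Y)) {e : G → MvPolynomial σ K}
    (he : restrictTotalDegree σ K (M + a) ≤ Submodule.span K (Set.range e))
    {f : MvPolynomial σ K} {D : ℕ} (hf : f.IsHomogeneous D) :
    ∃ b : G → MvPolynomial ι K, (∀ g, a * (b g).totalDegree ≤ D) ∧
      Ideal.Quotient.mk I f =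
        ∑ g, aeval (fun i => Ideal.Quotient.mk I (Y i)) (b g) * Ideal.Quotient.mk I (e g) := by
  have := Fintype.ofFinite ι
  induction D using Nat.strong_induction_on generalizing f with
  | _ D ih =>
  rcases le_or_gt D (M + a) with hD | hD
  · obtain ⟨c, rfl⟩ := (Submodule.mem_span_range_iff_exists_fun K).1
      (he ((mem_restrictTotalDegree _ _ _).2 (hf.totalDegree_le.trans hD)))
    refine ⟨fun g => C (c g), fun g => by simp only [totalDegree_C, mul_zero, zero_le], ?_⟩
    rw [map_sum]
    exact Finset.sum_congr rfl fun g _ => by rw [aeval_C, smul_eq_C_mul, map_mul]; rfl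
  · obtain ⟨c, hc, hfc⟩ := exists_mk_eq_sum_mk_mul hI hY hf (by lia)
      (hM (mem_pow_idealOfVars_of_isHomogeneous hf (by lia)))
    choose b hbdeg hb using fun i => ih (D - a) (by lia) (hc i)
    refine ⟨fun g => ∑ i, X i * b i g, fun g => ?_, ?_⟩
    · have hdeg : (∑ i, X i * b i g).totalDegree ≤ D / a := by
        refine totalDegree_finsetSum_le fun i _ => (totalDegree_mul _ _).trans ?_
        rw [totalDegree_X, Nat.le_div_iff_mul_le ha]
        linarith [hbdeg i g, Nat.sub_add_cancel (show a ≤ D by lia)]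
      exact (Nat.mul_le_mul_left a hdeg).trans (Nat.mul_div_le D a)
    · simp only [hfc, hb, map_sum, map_mul, aeval_X, Finset.mul_sum, Finset.sum_mul, mul_assoc]
      exact Finset.sum_comm

theorem finite_of_forall_isHomogeneous {P G : Type*} [CommRing P] [Fintype G]
    (φ : P →+* MvPolynomial σ K ⧸ I) (e : G → MvPolynomial σ K ⧸ I)
    (h : ∀ (D : ℕ) (f : MvPolynomial σ K), f.IsHomogeneous D →
      ∃ b : G → P, Ideal.Quotient.mk I f = ∑ g, φ (b g) * e g) : φ.Finite := by
  algebraize [φ]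
  refine (RingHom.finite_algebraMap (A := P)).2 ⟨?_⟩
  suffices htop : ⊤ ≤ Submodule.span P (Set.range e) from
    top_le_iff.1 htop ▸ Submodule.fg_span (Set.finite_range e)
  rintro s -
  obtain ⟨f, rfl⟩ := Ideal.Quotient.mk_surjective s
  rw [← sum_homogeneousComponent f, map_sum]
  refine Submodule.sum_mem _ fun i _ => ?_
  obtain ⟨b, hb⟩ := h i _ (homogeneousComponent_isHomogeneous i f)
  rw [hb]
  exact Submodule.sum_mem _ fun g _ => Submodule.smul_mem _ (b g) (Submodule.subset_span ⟨g, rfl⟩)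

theorem finite_aeval_mk_and_exists_bounded_generators [Finite σ] [Finite ι] (ha : 0 < a)
    (hI : I.IsHomogeneous (homogeneousSubmodule σ K)) (hY : ∀ i, (Y i).IsHomogeneous a)
    (hrad : idealOfVars σ K ≤ (I ⊔ Ideal.span (Set.range Y)).radical) :
    (aeval fun i => Ideal.Quotient.mk I (Y i) : MvPolynomial ι K →ₐ[K] _).Finite ∧
      ∃ (r : ℕ) (e : Fin r → MvPolynomial σ K ⧸ I), ∀ (D : ℕ) (f : MvPolynomial σ K),
        f.IsHomogeneous D → ∃ b : Fin r → MvPolynomial ι K, (∀ g, a * (b g).totalDegree ≤ D) ∧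
          Ideal.Quotient.mk I f =
            ∑ g, aeval (fun i => Ideal.Quotient.mk I (Y i)) (b g) * e g := by
  obtain ⟨M, hM⟩ := Ideal.exists_pow_le_of_le_radical_of_fg hrad (IsNoetherian.noetherian _)
  obtain ⟨r, e, he⟩ := Submodule.fg_iff_exists_fin_generating_family.1
    (Module.Finite.iff_fg.1 (inferInstance : Module.Finite K (restrictTotalDegree σ K (M + a))))
  have hrep (D : ℕ) (f : MvPolynomial σ K) (hf : f.IsHomogeneous D) :=
    exists_mk_eq_sum_aeval_mul ha hI hY hM he.ge hf
  exact ⟨finite_of_forall_isHomogeneous _ _ fun D f hf => (hrep D f hf).imp fun _ => And.right,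
    r, _, hrep⟩

theorem injective_aeval_of_finite {A : Type*} [CommRing A] [IsDomain A] [Algebra K A]
    [Algebra.FiniteType K A] [Finite ι] {x : ι → A}
    (hfin : (aeval x : MvPolynomial ι K →ₐ[K] A).Finite) (hdim : natTrdeg K A = Nat.card ι) :
    Function.Injective (aeval x : MvPolynomial ι K →ₐ[K] A) := by
  have hint : Algebra.IsIntegral (Algebra.adjoin K (Set.range x)) A := by
    have hrange : (aeval x).range = Algebra.adjoin K (Set.range x) :=
      (Algebra.adjoin_range_eq_range_aeval K x).symm
    rw [← hrange]
    refine ⟨fun s => ?_⟩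
    exact RingHom.IsIntegral.tower_top (aeval x).rangeRestrict.toRingHom
      (algebraMap (aeval x : MvPolynomial ι K →ₐ[K] A).range A) hfin.to_isIntegral s
  refine (Algebra.IsAlgebraic.isTranscendenceBasis_of_lift_le_trdeg_of_finite K x ?_).1
  rw [← cast_natTrdeg K A, hdim, ← Nat.cast_card, Cardinal.lift_natCast, Cardinal.lift_natCast]

end GradedRepresentation

section GenericFreeness

variable {P S : Type*} [CommRing P] [IsDomain P]

theorem exists_smul_eq_sum_smul [IsNoetherianRing P] [AddCommGroup S]
    [Module P S] [Module.Finite P S] :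
    ∃ (r : ℕ) (w : Fin r → S) (p : P) (φ : S →ₗ[P] Fin r → P),
      p ≠ 0 ∧ ∀ s, p • s = ∑ l, φ s l • w l := by
  obtain ⟨B, hB, hmax⟩ := exists_maximal_linearIndepOn P (id : S → S)
  have hfin : Finite B := LinearIndependent.finite_of_isNoetherian hB
  obtain ⟨r, ⟨eB⟩⟩ := Finite.exists_equiv_fin B
  let w (l : Fin r) : S := eB.symm l
  have hw : LinearIndependent P w := hB.comp _ eB.symm.injective
  have hrange : Set.range w = B := by
    rw [show w = Subtype.val ∘ eB.symm from rfl, eB.symm.surjective.range_comp, Subtype.range_coe]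
  have htorsion : Module.IsTorsion P (S ⧸ Submodule.span P (Set.range w)) := by
    intro s
    obtain ⟨s, rfl⟩ := Submodule.Quotient.mk_surjective _ s
    by_cases hs : s ∈ B
    · refine ⟨1, ?_⟩
      rw [one_smul, Submodule.Quotient.mk_eq_zero, hrange]
      exact Submodule.subset_span hs
    · obtain ⟨c, hc, hcs⟩ := hmax s hs
      refine ⟨⟨c, mem_nonZeroDivisors_of_ne_zero hc⟩, ?_⟩
      rw [Set.image_id, ← hrange] at hcs
      exact (Submodule.Quotient.mk_eq_zero _).2 hcs
  obtain ⟨p, hp, hp0⟩ := Submodule.annihilator_top_inter_nonZeroDivisors htorsion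
  have hps (s : S) : p • s ∈ Submodule.span P (Set.range w) := by
    rw [← Submodule.Quotient.mk_eq_zero, Submodule.Quotient.mk_smul]
    exact Submodule.mem_annihilator.1 hp _ trivial
  let b := Module.Basis.span hw
  refine ⟨r, w, p, b.equivFun.toLinearMap ∘ₗ (LinearMap.lsmul P S p).codRestrict _ hps,
    nonZeroDivisors.ne_zero hp0, fun s => ?_⟩
  have hsum := congrArg Subtype.val (b.sum_equivFun ⟨p • s, hps s⟩)
  simp only [b, Submodule.coe_sum, Submodule.coe_smul, Module.Basis.span_apply] at hsum
  exact hsum.symm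

end GenericFreeness

section Coprimality

variable {σ K : Type*} [Field K] {i j l : σ} {m N : ℕ}

theorem exists_eq_add_X_pow_mul (i : σ) (hm : 0 < m) (f : MvPolynomial σ K) :
    ∃ r q : MvPolynomial σ K,
      f = r + X i ^ m * q ∧ degreeOf i r < m ∧ r.totalDegree ≤ f.totalDegree := by
  classical
  refine ⟨modMonomial f (Finsupp.single i m), divMonomial f (Finsupp.single i m), ?_, ?_, ?_⟩
  · rw [X_pow_eq_monomial, modMonomial_add_divMonomial]
  · refine (degreeOf_lt_iff hm).2 fun u hu => ?_
    by_contra! hle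
    exact mem_support_iff.1 hu (coeff_modMonomial_of_le f (Finsupp.single_le_iff.2 hle))
  · refine totalDegree_le_of_support_subset fun u hu => ?_
    rw [mem_support_iff] at hu ⊢
    by_cases hle : Finsupp.single i m ≤ u
    · exact absurd (coeff_modMonomial_of_le f hle) hu
    · rwa [coeff_modMonomial_of_not_le f hle] at hu

theorem eq_zero_of_X_pow_dvd_of_degreeOf_lt {f : MvPolynomial σ K} (h : X i ^ m ∣ f)
    (hdeg : degreeOf i f < m) : f = 0 := by
  classical
  obtain ⟨g, rfl⟩ := h
  by_contra hne
  rw [degreeOf_mul_eq (pow_ne_zero _ (X_ne_zero i)) (right_ne_zero_of_mul hne),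
    degreeOf_pow_eq _ _ _ (X_ne_zero i), degreeOf_X_self] at hdeg
  lia

theorem not_X_dvd_X_pow (h : i ≠ j) : ¬ (X i : MvPolynomial σ K) ∣ X j ^ N := fun hdvd =>
  h (X_dvd_X.1 (X_prime.dvd_of_dvd_pow hdvd))

theorem degreeOf_X_pow_mul_le (h : i ≠ j) (f : MvPolynomial σ K) :
    degreeOf i (X j ^ N * f) ≤ degreeOf i f := by
  have hmul := degreeOf_mul_le i (X j ^ N) f
  rwa [degreeOf_X_pow_of_ne N h, zero_add] at hmul

theorem exists_eq_X_pow_mul_add_X_pow_mul (hij : i ≠ j) (hil : i ≠ l) (hjl : j ≠ l) (hm : 0 < m)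
    {f g : MvPolynomial σ K} (h : X i ^ m ∣ X l ^ N * f - X j ^ N * g) :
    ∃ q c : MvPolynomial σ K,
      f = X j ^ N * q + X i ^ m * c ∧ q.totalDegree ≤ f.totalDegree - N := by
  obtain ⟨f', c, hf, hf'i, hf'⟩ := exists_eq_add_X_pow_mul i hm f
  obtain ⟨g', d, hg, hg'i, -⟩ := exists_eq_add_X_pow_mul i hm g
  have hzero : X l ^ N * f' - X j ^ N * g' = 0 := by
    refine eq_zero_of_X_pow_dvd_of_degreeOf_lt (i := i) (m := m) ?_ ?_
    · have heq : X l ^ N * f' - X j ^ N * g' =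
          (X l ^ N * f - X j ^ N * g) - X i ^ m * (X l ^ N * c - X j ^ N * d) := by
        rw [hf, hg]
        ring
      exact heq ▸ dvd_sub h (dvd_mul_right _ _)
    · exact (degreeOf_sub_le _ _ _).trans_lt (max_lt
        ((degreeOf_X_pow_mul_le hil f').trans_lt hf'i)
        ((degreeOf_X_pow_mul_le hij g').trans_lt hg'i))
  obtain ⟨q, rfl⟩ : X j ^ N ∣ f' :=
    X_prime.pow_dvd_of_dvd_mul_left N (not_X_dvd_X_pow hjl)
      ⟨g', sub_eq_zero.1 hzero⟩
  refine ⟨q, c, hf, ?_⟩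
  rcases eq_or_ne q 0 with rfl | hq
  · simp only [totalDegree_zero, zero_le]
  · rw [totalDegree_mul_of_isDomain (pow_ne_zero N (X_ne_zero j)) hq, totalDegree_X_pow] at hf'
    lia

end Coprimality

section ModuleDegrees

variable {σ ι G K M : Type*} [Field K] [AddCommGroup M] [Module (MvPolynomial σ K) M]

theorem exists_totalDegree_apply_sum_smul_le [Finite ι] [Fintype G]
    (φ : M →ₗ[MvPolynomial σ K] ι → MvPolynomial σ K) (e : G → M) :
    ∃ B, ∀ (N : ℕ) (b : G → MvPolynomial σ K), (∀ g, (b g).totalDegree ≤ N) →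
      ∀ l, (φ (∑ g, b g • e g) l).totalDegree ≤ N + B := by
  obtain ⟨B, hB⟩ := Finite.exists_le fun gl : G × ι => (φ (e gl.1) gl.2).totalDegree
  refine ⟨B, fun N b hb l => ?_⟩
  simp only [map_sum, map_smul, Finset.sum_apply, Pi.smul_apply, smul_eq_mul]
  exact totalDegree_finsetSum_le fun g _ =>
    (totalDegree_mul _ _).trans (add_le_add (hb g) (hB (g, l)))

variable {S : Type*} [CommRing S] [Algebra (MvPolynomial σ K) S]

theorem exists_totalDegree_apply_mul_sub_le [Finite ι] [Fintype G]
    (φ : S →ₗ[MvPolynomial σ K] ι → MvPolynomial σ K) (w : G → S) (p : MvPolynomial σ K) (N : ℕ) :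
    ∃ B, ∀ b : G → MvPolynomial σ K, (∀ g, (b g).totalDegree ≤ N) →
      ∀ l, (φ ((∑ g, b g • w g) * (algebraMap _ S p - ∑ g, b g • w g)) l).totalDegree ≤ B := by
  obtain ⟨B₁, hB₁⟩ := exists_totalDegree_apply_sum_smul_le φ w
  obtain ⟨B₂, hB₂⟩ := exists_totalDegree_apply_sum_smul_le φ fun g : G × G => w g.1 * w g.2
  refine ⟨max (p.totalDegree + (N + B₁)) (N + N + B₂), fun b hb l => ?_⟩
  have hexpand : (∑ g, b g • w g) * (algebraMap _ S p - ∑ g, b g • w g) =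
      p • (∑ g, b g • w g) - ∑ g : G × G, (b g.1 * b g.2) • (w g.1 * w g.2) := by
    rw [mul_sub, mul_comm, ← Algebra.smul_def, Finset.sum_mul_sum, Fintype.sum_prod_type]
    simp only [smul_mul_smul_comm]
  rw [hexpand, map_sub, map_smul, Pi.sub_apply, Pi.smul_apply, smul_eq_mul]
  refine (totalDegree_sub _ _).trans (max_le_max ?_ ?_)
  · exact (totalDegree_mul _ _).trans (by gcongr; exact hB₁ N b hb l)
  · exact hB₂ (N + N) _ (fun g => (totalDegree_mul _ _).trans (add_le_add (hb _) (hb _))) l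

theorem dvd_apply_of_algebraMap_dvd {P : Type*} [CommRing P] [Algebra P S] (φ : S →ₗ[P] ι → P)
    {y : P} {s : S} (h : algebraMap P S y ∣ s) (l : ι) : y ∣ φ s l := by
  obtain ⟨u, rfl⟩ := h
  rw [← Algebra.smul_def, map_smul]
  exact dvd_mul_right _ _

theorem exists_algebraMap_mul_eq_add [Fintype ι] {i j l : σ} (hij : i ≠ j) (hil : i ≠ l)
    (hjl : j ≠ l) {p : MvPolynomial σ K} {w : ι → S}
    {φ : S →ₗ[MvPolynomial σ K] ι → MvPolynomial σ K} (hφ : ∀ s, p • s = ∑ t, φ s t • w t)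
    {m N B : ℕ} (hm : 0 < m) {f g : S} (hf : ∀ t, (φ f t).totalDegree ≤ N + B)
    (hdvd : algebraMap (MvPolynomial σ K) S (X i ^ m) ∣
      (X l ^ N : MvPolynomial σ K) • f - (X j ^ N : MvPolynomial σ K) • g) :
    ∃ (b : ι → MvPolynomial σ K) (r : S), (∀ t, (b t).totalDegree ≤ B) ∧
      p • f = (X j ^ N : MvPolynomial σ K) • ∑ t, b t • w t +
        (X i ^ m : MvPolynomial σ K) • r := by
  have hdvd' (t : ι) : X i ^ m ∣ X l ^ N * φ f t - X j ^ N * φ g t := by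
    simpa only [map_sub, map_smul, Pi.sub_apply, Pi.smul_apply, smul_eq_mul] using
      dvd_apply_of_algebraMap_dvd φ hdvd t
  choose b c hbc hb using fun t => exists_eq_X_pow_mul_add_X_pow_mul hij hil hjl hm (hdvd' t)
  refine ⟨b, ∑ t, c t • w t, fun t => (hb t).trans (Nat.sub_le_iff_le_add'.2 (hf t)), ?_⟩
  simp_rw [hφ, Finset.smul_sum, ← Finset.sum_add_distrib]
  exact Finset.sum_congr rfl fun t _ => by rw [← mul_smul, ← mul_smul, ← add_smul, ← hbc t]

theorem smul_eq_zero_of_algebraMap_X_pow_dvd [Fintype ι] {i j : σ} (hij : i ≠ j)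
    {p : MvPolynomial σ K} {w : ι → S} {φ : S →ₗ[MvPolynomial σ K] ι → MvPolynomial σ K}
    (hφ : ∀ s, p • s = ∑ t, φ s t • w t) {m N : ℕ} {s : S} (hs : ∀ t, (φ s t).totalDegree < m)
    (hdvd : algebraMap (MvPolynomial σ K) S (X i ^ m) ∣
      algebraMap (MvPolynomial σ K) S (X j ^ N) * s) : p • s = 0 := by
  have hφs : φ s = 0 := by
    ext1 t
    refine eq_zero_of_X_pow_dvd_of_degreeOf_lt (i := i) (m := m) ?_
      ((degreeOf_le_totalDegree _ _).trans_lt (hs t))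
    have h := dvd_apply_of_algebraMap_dvd φ hdvd t
    rw [← Algebra.smul_def, map_smul] at h
    exact X_prime.pow_dvd_of_dvd_mul_left m (not_X_dvd_X_pow hij) h
  simp only [hφ, hφs, Pi.zero_apply, zero_smul, Finset.sum_const_zero]

theorem dvd_mul_mul_mul_sub {A : Type*} [CommRing A] {x s p q f g c : A} (hfg : f + g = s)
    (hpf : p * f = s * q + x * c) (hdvd : x ∣ f * g) : x ∣ s * s * (q * (p - q)) := by
  have hpg : p * g = s * (p - q) - x * c := by linear_combination p * hfg - hpf
  have hprod : s * s * (q * (p - q)) =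
      p * p * (f * g) + x * (c * (s * q) - c * (p * g)) := by
    linear_combination -(p * g) * hpf - s * q * hpg
  exact hprod ▸ dvd_add (hdvd.mul_left _) (dvd_mul_right _ _)

/- Once `y (X i ^ m)` divides `f₁ * g₁` and `f₁ * g₂ - f₂ * g₁`, the element `y p * f₁` is congruent
to `y (X j ^ N) * q` modulo `y (X i ^ m)`, where the coordinates of `q` have degree bounded
independently of `m` and `N`. Then `X i ^ m` divides the coordinates of `q * (y p - q)`, which are
of bounded degree, so for large `m` one of `q`, `y p - q` vanishes. -/
theorem exists_X_pow_dvd_mul_or_dvd_mul {S : Type*} [CommRing S] [IsDomain S] [Finite σ]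
    [Fintype G] {y : MvPolynomial σ K →+* S} (hfin : y.Finite) (hinj : Function.Injective y)
    (e : G → S) {i j l : σ} (hij : i ≠ j) (hil : i ≠ l) (hjl : j ≠ l) :
    ∃ p : MvPolynomial σ K, p ≠ 0 ∧ ∃ m₀ : ℕ, ∀ m ≥ m₀, ∀ (N : ℕ) (b : G → MvPolynomial σ K)
      (f₁ g₁ f₂ g₂ : S), (∀ g, (b g).totalDegree ≤ N) → f₁ = ∑ g, y (b g) * e g →
      f₁ + g₁ = y (X j ^ N) → f₂ + g₂ = y (X l ^ N) →
      y (X i ^ m) ∣ f₁ * g₂ - f₂ * g₁ → y (X i ^ m) ∣ f₁ * g₁ →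
      y (X i ^ m) ∣ y p * f₁ ∨ y (X i ^ m) ∣ y p * g₁ := by
  let _ := y.toAlgebra
  have hy : algebraMap (MvPolynomial σ K) S = y := rfl
  have : Module.Finite (MvPolynomial σ K) S := hfin
  obtain ⟨r, w, p, φ, hp, hφ⟩ := exists_smul_eq_sum_smul (P := MvPolynomial σ K) (S := S)
  obtain ⟨B, hB⟩ := exists_totalDegree_apply_sum_smul_le φ e
  obtain ⟨C, hC⟩ := exists_totalDegree_apply_mul_sub_le φ w p B
  have hp' : y p ≠ 0 := (map_ne_zero_iff _ hinj).2 hp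
  refine ⟨p, hp, C + 1, fun m hm N b f₁ g₁ f₂ g₂ hb hf₁ h₁ h₂ hdvd hdvd₁ => ?_⟩
  obtain ⟨α, c, hα, hpf⟩ := exists_algebraMap_mul_eq_add hij hil hjl hφ (by lia : 0 < m)
    (hf₁ ▸ hB N b hb) (g := f₂) (by
      rw [Algebra.smul_def, Algebra.smul_def, hy, ← h₁, ← h₂]
      convert hdvd using 1
      ring)
  simp only [Algebra.smul_def p, Algebra.smul_def (X _ ^ _), hy] at hpf
  set q := ∑ t, α t • w t
  have hdvdq : y (X i ^ m) ∣ y (X j ^ (N + N)) * (q * (y p - q)) := by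
    rw [pow_add, map_mul]
    exact dvd_mul_mul_mul_sub h₁ hpf hdvd₁
  have hzero : y p * (q * (y p - q)) = 0 := by
    rw [← hy, ← Algebra.smul_def]
    refine smul_eq_zero_of_algebraMap_X_pow_dvd hij hφ (m := m) (fun t => ?_) hdvdq
    exact Nat.lt_of_le_of_lt (hC α hα t) hm
  rcases mul_eq_zero.1 ((mul_eq_zero.1 hzero).resolve_left hp') with hq0 | hq0
  · left
    rw [hpf, hq0, mul_zero, zero_add]
    exact dvd_mul_right _ _
  · right
    refine ⟨-c, ?_⟩
    linear_combination y p * h₁ - hpf + y (X j ^ N) * hq0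

end ModuleDegrees

section Connectedness

attribute [local instance] MvPolynomial.gradedAlgebra

theorem exists_forall_not_pow_dvd_mul {S : Type*} [CommRing S] [IsDomain S] [IsNoetherianRing S]
    (Q : Ideal S) [Q.IsPrime] {h p : S} (hh : h ∈ Q) (hp : p ≠ 0) :
    ∃ m₁ : ℕ, ∀ m ≥ m₁, ∀ s ∉ Q, ¬ h ^ m ∣ p * s := by
  let B := Localization.AtPrime Q
  have hpB : algebraMap S B p ≠ 0 :=
    (map_ne_zero_iff _ (IsLocalization.injective B Q.primeCompl_le_nonZeroDivisors)).2 hp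
  obtain ⟨m₁, hm₁⟩ : ∃ m₁, algebraMap S B p ∉ IsLocalRing.maximalIdeal B ^ m₁ := by
    by_contra! hmem
    refine hpB ((Submodule.mem_bot B).1 ?_)
    rw [← Ideal.iInf_pow_eq_bot_of_isLocalRing _ (IsLocalRing.maximalIdeal.isMaximal B).ne_top]
    exact (Ideal.mem_iInf).2 hmem
  refine ⟨m₁, fun m hm s hs ⟨c, hc⟩ => hm₁ (Ideal.pow_le_pow_right hm ?_)⟩
  have hunit : IsUnit (algebraMap S B s) := IsLocalization.map_units B (⟨s, hs⟩ : Q.primeCompl)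
  rw [← Ideal.mul_unit_mem_iff_mem _ hunit, ← map_mul, hc, map_mul, map_pow]
  exact Ideal.mul_mem_right _ _
    (Ideal.pow_mem_pow ((IsLocalization.AtPrime.to_map_mem_maximal_iff B Q h).2 hh) m)

theorem exists_forall_not_mk_pow_dvd_mul {R : Type*} [CommRing R] [IsNoetherianRing R]
    {I q : Ideal R} [I.IsPrime] [q.IsPrime] (hIq : I ≤ q) {h : R} (hh : h ∈ q) {p : R ⧸ I}
    (hp : p ≠ 0) :
    ∃ m₁ : ℕ, ∀ m ≥ m₁, ∀ s ∉ q, ¬ Ideal.Quotient.mk I h ^ m ∣ p * Ideal.Quotient.mk I s := by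
  have hprime : (q.map (Ideal.Quotient.mk I)).IsPrime :=
    Ideal.map_isPrime_of_surjective Ideal.Quotient.mk_surjective (by rwa [Ideal.mk_ker])
  obtain ⟨m₁, hm₁⟩ := exists_forall_not_pow_dvd_mul (q.map (Ideal.Quotient.mk I))
    (Ideal.mem_map_of_mem _ hh) hp
  exact ⟨m₁, fun m hm s hs => hm₁ m hm _ fun hmem => hs ((Ideal.mem_quotient_iff_mem hIq).1 hmem)⟩

theorem exists_forall_mk_pow_dvd_mk_mul {R : Type*} [CommRing R] [IsNoetherianRing R]
    {I I₁ I₂ : Ideal R} {h : R} (hprod : I₁ * I₂ ≤ (I ⊔ Ideal.span {h}).radical) (m : ℕ) :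
    ∃ E ≠ 0, ∀ f ∈ I₁ ^ E, ∀ g ∈ I₂ ^ E,
      Ideal.Quotient.mk I h ^ m ∣ Ideal.Quotient.mk I (f * g) := by
  obtain ⟨c, hc⟩ := Ideal.exists_pow_le_of_le_radical_of_fg hprod (IsNoetherian.noetherian _)
  refine ⟨c * m + 1, Nat.succ_ne_zero _, fun f hf g hg => ?_⟩
  have hle : I₁ ^ (c * m + 1) * I₂ ^ (c * m + 1) ≤ (I ⊔ Ideal.span {h}) ^ m := by
    rw [← mul_pow]
    refine (Ideal.pow_le_pow_right (Nat.le_succ _)).trans ?_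
    rw [pow_mul]
    exact Ideal.pow_right_mono hc m
  have hmem := Ideal.mem_map_of_mem (Ideal.Quotient.mk I) (hle (Ideal.mul_mem_mul hf hg))
  rwa [Ideal.map_pow, Ideal.map_sup, Ideal.map_quotient_self, bot_sup_eq, Ideal.map_span,
    Set.image_singleton, Ideal.span_singleton_pow, Ideal.mem_span_singleton] at hmem

variable {σ K : Type*} [Field K] [Finite σ] {I I₁ I₂ q₁ q₂ : Ideal (MvPolynomial σ K)} {a : ℕ}

theorem exists_add_eq_pow_of_isHomogeneous (ha : 0 < a)
    (h₁ : I₁.IsHomogeneous (homogeneousSubmodule σ K))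
    (h₂ : I₂.IsHomogeneous (homogeneousSubmodule σ K))
    (hrad : idealOfVars σ K ≤ (I₁ ⊔ I₂).radical) :
    ∃ N : ℕ, ∀ Y : MvPolynomial σ K, Y.IsHomogeneous a →
      ∃ f ∈ I₁, ∃ g ∈ I₂, f.IsHomogeneous (a * N) ∧ f + g = Y ^ N := by
  obtain ⟨N, hN⟩ := Ideal.exists_pow_le_of_le_radical_of_fg hrad (IsNoetherian.noetherian _)
  refine ⟨N, fun Y hY => ?_⟩
  have hYN : (Y ^ N).IsHomogeneous (a * N) := hY.pow N
  obtain ⟨f, hf, g, hg, hfg⟩ := Submodule.mem_sup.1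
    (hN (mem_pow_idealOfVars_of_isHomogeneous hYN (Nat.le_mul_of_pos_left N ha)))
  refine ⟨_, isHomogeneous_iff_homogeneousComponent_mem.1 h₁ f hf (a * N), _,
    isHomogeneous_iff_homogeneousComponent_mem.1 h₂ g hg (a * N),
    homogeneousComponent_isHomogeneous _ _, ?_⟩
  rw [← map_add, hfg, homogeneousComponent_eq_self hYN]

variable [Infinite K] [I.IsPrime] {h : MvPolynomial σ K} {t : ℕ}

theorem exists_parameters_mk_pow_dvd_mul_or_dvd_mul (ha : 0 < a)
    (hI : I.IsHomogeneous (homogeneousSubmodule σ K))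
    (hdim : natTrdeg K (MvPolynomial σ K ⧸ I) = t + 3) (hh : h.IsHomogeneous a) (hhI : h ∉ I) :
    ∃ Y₁ Y₂ : MvPolynomial σ K, Y₁.IsHomogeneous a ∧ Y₂.IsHomogeneous a ∧
      (∀ q ∈ (I ⊔ Ideal.span {h}).minimalPrimes, Y₁ ∉ q) ∧
      ∃ p : MvPolynomial σ K ⧸ I, p ≠ 0 ∧ ∃ m₀ : ℕ, ∀ m ≥ m₀, ∀ (N : ℕ)
        (f₁ g₁ f₂ g₂ : MvPolynomial σ K), f₁.IsHomogeneous (a * N) →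
        f₁ + g₁ = Y₁ ^ N → f₂ + g₂ = Y₂ ^ N →
        Ideal.Quotient.mk I h ^ m ∣ Ideal.Quotient.mk I (f₁ * g₂ - f₂ * g₁) →
        Ideal.Quotient.mk I h ^ m ∣ Ideal.Quotient.mk I (f₁ * g₁) →
        Ideal.Quotient.mk I h ^ m ∣ p * Ideal.Quotient.mk I f₁ ∨
          Ideal.Quotient.mk I h ^ m ∣ p * Ideal.Quotient.mk I g₁ := by
  obtain ⟨Y, rfl, hY, hrad, hYq⟩ := exists_isHomogeneous_parameters_cons hI hdim hh hhI
  obtain ⟨hfin, r, e, hrep⟩ := finite_aeval_mk_and_exists_bounded_generators ha hI hY hrad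
  have hinj := injective_aeval_of_finite hfin (by rw [hdim, Nat.card_fin])
  let y : MvPolynomial (Fin (t + 3)) K →+* MvPolynomial σ K ⧸ I :=
    (aeval fun i => Ideal.Quotient.mk I (Y i)).toRingHom
  have hX (i : Fin (t + 3)) (N : ℕ) : y (X i ^ N) = Ideal.Quotient.mk I (Y i) ^ N := by
    rw [map_pow]
    exact congrArg (· ^ N) (aeval_X _ i)
  obtain ⟨p, hp, m₀, hcore⟩ := exists_X_pow_dvd_mul_or_dvd_mul hfin hinj e
    (i := 0) (j := 1) (l := Fin.last _) (Fin.ne_of_val_ne (by simp))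
    (Fin.ne_of_val_ne (by simp)) (Fin.ne_of_val_ne (by simp))
  refine ⟨Y 1, Y (Fin.last _), hY _, hY _, hYq, y p, (map_ne_zero_iff y hinj).2 hp, m₀,
    fun m hm N f₁ g₁ f₂ g₂ hf₁ h₁ h₂ hdvd hdvd₁ => ?_⟩
  obtain ⟨b, hb, hfb⟩ := hrep _ f₁ hf₁
  rw [← hX 0] at hdvd hdvd₁ ⊢
  exact hcore m hm N b _ (Ideal.Quotient.mk I g₁) (Ideal.Quotient.mk I f₂) (Ideal.Quotient.mk I g₂)
    (fun g => Nat.le_of_mul_le_mul_left (hb g) ha) hfb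
    ((hX 1 N).symm ▸ by rw [← map_add, h₁, map_pow])
    ((hX _ N).symm ▸ by rw [← map_add, h₂, map_pow])
    (by simpa only [map_sub, map_mul] using hdvd) (by rwa [← map_mul])

/- If `I₁` and `I₂` had no common zero, then powers `Y₁ ^ N`, `Y₂ ^ N` of two forms would decompose
as `f + g` with `f ∈ I₁ ^ E`, `g ∈ I₂ ^ E`, all products `f * g` being divisible by a high power of
`h` modulo `I`. -/
theorem not_idealOfVars_le_radical_sup (ha : 0 < a)
    (hI : I.IsHomogeneous (homogeneousSubmodule σ K))
    (hdim : natTrdeg K (MvPolynomial σ K ⧸ I) = t + 3) (hh : h.IsHomogeneous a) (hhI : h ∉ I)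
    (h₁ : I₁.IsHomogeneous (homogeneousSubmodule σ K))
    (h₂ : I₂.IsHomogeneous (homogeneousSubmodule σ K))
    (hprod : I₁ * I₂ ≤ (I ⊔ Ideal.span {h}).radical)
    (hq₁ : q₁ ∈ (I ⊔ Ideal.span {h}).minimalPrimes) (hI₁ : I₁ ≤ q₁)
    (hq₂ : q₂ ∈ (I ⊔ Ideal.span {h}).minimalPrimes) (hI₂ : I₂ ≤ q₂) :
    ¬ idealOfVars σ K ≤ (I₁ ⊔ I₂).radical := by
  intro hrad
  obtain ⟨Y₁, Y₂, hY₁, hY₂, hYq, p, hp, m₀, hcore⟩ :=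
    exists_parameters_mk_pow_dvd_mul_or_dvd_mul ha hI hdim hh hhI
  have hkrull (q) (hq : q ∈ (I ⊔ Ideal.span {h}).minimalPrimes) :=
    have := hq.1.1
    exists_forall_not_mk_pow_dvd_mul (le_sup_left.trans hq.1.2)
      (hq.1.2 (Ideal.mem_sup_right (Ideal.mem_span_singleton_self h))) hp
  obtain ⟨m₁, hm₁⟩ := hkrull q₁ hq₁
  obtain ⟨m₂, hm₂⟩ := hkrull q₂ hq₂
  let m := max m₀ (max m₁ m₂)
  obtain ⟨E, hE, hdvd⟩ := exists_forall_mk_pow_dvd_mk_mul hprod m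
  obtain ⟨N, hN⟩ := exists_add_eq_pow_of_isHomogeneous ha (isHomogeneous_pow h₁ E)
    (isHomogeneous_pow h₂ E) (by
      rwa [Ideal.radical_sup, Ideal.radical_pow I₁ hE, Ideal.radical_pow I₂ hE,
        ← Ideal.radical_sup])
  obtain ⟨f₁, hf₁, g₁, hg₁, hf₁N, hfg₁⟩ := hN Y₁ hY₁
  obtain ⟨f₂, hf₂, g₂, hg₂, -, hfg₂⟩ := hN Y₂ hY₂
  have hYN (q) (hq : q ∈ (I ⊔ Ideal.span {h}).minimalPrimes) (hf : f₁ ∈ q) (hg : g₁ ∈ q) : False :=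
    hYq q hq (hq.1.1.mem_of_pow_mem N (hfg₁ ▸ add_mem hf hg))
  rcases hcore m (le_max_left _ _) N f₁ g₁ f₂ g₂ hf₁N hfg₁ hfg₂
    (map_sub (Ideal.Quotient.mk I) _ _ ▸ dvd_sub (hdvd _ hf₁ _ hg₂) (hdvd _ hf₂ _ hg₁))
    (hdvd _ hf₁ _ hg₁) with h | h
  · exact hm₂ m (by lia) f₁ (fun hf => hYN q₂ hq₂ hf (hI₂ (Ideal.pow_le_self hE hg₁))) h
  · exact hm₁ m (by lia) g₁ (fun hg => hYN q₁ hq₁ (hI₁ (Ideal.pow_le_self hE hf₁)) hg) h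

end Connectedness

section SpecializedSystems

open Matrix

variable {K A ι : Type*} [Field K] [CommRing A] [Algebra K A]

theorem natTrdeg_localizationAway [IsDomain A] {δ : A} (hδ : δ ≠ 0) :
    natTrdeg K (Localization.Away δ) = natTrdeg K A := by
  have hle := powers_le_nonZeroDivisors_of_noZeroDivisors hδ
  have : IsDomain (Localization.Away δ) := IsLocalization.isDomain_localization hle
  have : FaithfulSMul A (Localization.Away δ) :=
    (faithfulSMul_iff_algebraMap_injective _ _).2 (IsLocalization.injective _ hle)
  have : Algebra.IsAlgebraic A (Localization.Away δ) :=
    IsLocalization.isAlgebraic _ (Submonoid.powers δ)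
  rw [natTrdeg, natTrdeg, ← trdeg_add_eq K A (A := Localization.Away δ),
    trdeg_eq_zero (R := A), add_zero]

theorem natTrdeg_mvPolynomial_of_isDomain [IsDomain A] [Algebra.FiniteType K A] [Finite ι] :
    natTrdeg K (MvPolynomial ι A) = Nat.card ι + natTrdeg K A := by
  have h := lift_trdeg_add_eq K A (MvPolynomial ι A)
  rw [MvPolynomial.trdeg_of_isDomain, ← cast_natTrdeg K A] at h
  simpa [natTrdeg, Nat.card, Cardinal.toNat_add, add_comm] using (congrArg Cardinal.toNat h).symm

/-- A set of points of affine space contained in a hypersurface, that is, one which is not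
Zariski dense. -/
def LiesOnHypersurface (s : Set (ι → K)) : Prop :=
  ∃ F : MvPolynomial ι K, F ≠ 0 ∧ ∀ t ∈ s, eval t F = 0

theorem LiesOnHypersurface.mono {s t : Set (ι → K)} (ht : LiesOnHypersurface t) (hst : s ⊆ t) :
    LiesOnHypersurface s :=
  ht.imp fun _ hF => ⟨hF.1, fun x hx => hF.2 x (hst hx)⟩

theorem LiesOnHypersurface.union {s t : Set (ι → K)} (hs : LiesOnHypersurface s)
    (ht : LiesOnHypersurface t) : LiesOnHypersurface (s ∪ t) := by
  obtain ⟨F, hF, hFs⟩ := hs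
  obtain ⟨G, hG, hGt⟩ := ht
  refine ⟨F * G, mul_ne_zero hF hG, ?_⟩
  rintro x (hx | hx)
  · rw [map_mul, hFs x hx, zero_mul]
  · rw [map_mul, hGt x hx, mul_zero]

theorem LiesOnHypersurface.iUnion {α : Type*} [Finite α] {s : α → Set (ι → K)}
    (hs : ∀ i, LiesOnHypersurface (s i)) : LiesOnHypersurface (⋃ i, s i) := by
  have := Fintype.ofFinite α
  choose F hF0 hF using hs
  refine ⟨∏ i, F i, Finset.prod_ne_zero_iff.2 fun i _ => hF0 i, fun t ht => ?_⟩
  obtain ⟨i, hi⟩ := Set.mem_iUnion.1 ht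
  rw [map_prod]
  exact Finset.prod_eq_zero (Finset.mem_univ i) (hF i t hi)

theorem liesOnHypersurface_range_algHom [Algebra.FiniteType K A] [Finite ι] (τ : ι → A)
    (hcard : natTrdeg K A < Nat.card ι) :
    LiesOnHypersurface (Set.range fun (ψ : A →ₐ[K] K) i => ψ (τ i)) := by
  have hτ : ¬ AlgebraicIndependent K τ := fun h =>
    hcard.not_ge (card_le_natTrdeg_of_algebraicIndependent h)
  rw [algebraicIndependent_iff] at hτ
  push Not at hτ
  obtain ⟨F, hF, hF0⟩ := hτ
  refine ⟨F, hF0, Set.forall_mem_range.2 fun ψ => ?_⟩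
  rw [← coe_aeval_eq_eval, RingHom.coe_coe, ← comp_aeval_apply, hF, map_zero]

theorem aevalTower_comp_mulVec {α β : Type*} [Fintype β] (ψ : A →ₐ[K] K) (x : ι → K)
    (P : Matrix α β A) (w : β → MvPolynomial ι A) :
    aevalTower ψ x ∘ (P.map C *ᵥ w) = P.map ψ *ᵥ (aevalTower ψ x ∘ w) := by
  funext i
  simp [mulVec, dotProduct, map_sum, aevalTower_C]

variable [IsDomain A] {J E S B : Type*}
  [Fintype J] [DecidableEq J] [Fintype E] [Fintype S] [Fintype B]

/- Over `A[X_E, X_S]` the system can be solved for the unknowns indexed by `J`; the solution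
together with the variables `X_E` is algebraically dependent because of its size. -/
theorem liesOnHypersurface_linearSystem_of_isUnit_det [Algebra.FiniteType K A]
    {M : Matrix J J A} (hM : IsUnit M.det) (N : Matrix J E A) (f : Matrix J S A)
    (hcard : Nat.card S + natTrdeg K A < Nat.card J) :
    LiesOnHypersurface {t : J ⊕ E → K | ∃ (ψ : A →ₐ[K] K) (l : S → K),
      (Matrix.fromCols M N).map ψ *ᵥ t = f.map ψ *ᵥ l} := by
  have : Algebra.FiniteType K (MvPolynomial (E ⊕ S) A) :=
    Algebra.FiniteType.trans (S := A) inferInstance inferInstance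
  let solution : J → MvPolynomial (E ⊕ S) A :=
    M⁻¹.map C *ᵥ (f.map C *ᵥ (X ∘ Sum.inr) - N.map C *ᵥ (X ∘ Sum.inl))
  obtain ⟨F, hF0, hF⟩ := liesOnHypersurface_range_algHom (K := K)
    (Sum.elim solution (X ∘ Sum.inl)) (by
      rw [natTrdeg_mvPolynomial_of_isDomain, Nat.card_sum, Nat.card_sum]
      lia)
  refine ⟨F, hF0, fun t ⟨ψ, l, hsys⟩ => ?_⟩
  set Ψ : MvPolynomial (E ⊕ S) A →ₐ[K] K := aevalTower ψ (Sum.elim (t ∘ Sum.inr) l) with hΨ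
  have hE : Ψ ∘ X ∘ Sum.inl = t ∘ Sum.inr := funext fun e => aevalTower_X ψ _ _
  have hS : Ψ ∘ X ∘ Sum.inr = l := funext fun s => aevalTower_X ψ _ _
  rw [Matrix.fromCols_map, Matrix.fromCols_mulVec, ← eq_sub_iff_add_eq] at hsys
  have hinv : M⁻¹.map ψ * M.map ψ = 1 := by
    rw [← Matrix.map_mul, Matrix.nonsing_inv_mul M hM, Matrix.map_one _ (map_zero ψ) (map_one ψ)]
  have hJ : Ψ ∘ solution = t ∘ Sum.inl := by
    have hsub (u w : J → MvPolynomial (E ⊕ S) A) : Ψ ∘ (u - w) = Ψ ∘ u - Ψ ∘ w :=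
      funext fun i => map_sub Ψ (u i) (w i)
    rw [aevalTower_comp_mulVec, hsub, aevalTower_comp_mulVec, aevalTower_comp_mulVec, ← hΨ, hE, hS,
      ← hsys, Matrix.mulVec_mulVec, hinv, Matrix.one_mulVec]
  have ht : t = fun i => Ψ (Sum.elim solution (X ∘ Sum.inl) i) := by
    funext i
    rcases i with i | e
    · exact (congrFun hJ i).symm
    · exact (congrFun hE e).symm
  exact ht ▸ hF _ ⟨Ψ, rfl⟩

theorem liesOnHypersurface_linearSystem_of_isUnit_det_submatrix [Algebra.FiniteType K A]
    (H : Matrix J B A) (f : Matrix J S A) (κ : J ↪ B) (hκ : IsUnit (H.submatrix id κ).det)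
    (hcard : Nat.card S + natTrdeg K A < Nat.card J) :
    LiesOnHypersurface {t : B → K | ∃ (ψ : A →ₐ[K] K) (l : S → K),
      H.map ψ *ᵥ t = f.map ψ *ᵥ l} := by
  classical
  let e : J ⊕ {b // b ∉ Set.range κ} ≃ B :=
    ((Equiv.ofInjective κ κ.injective).sumCongr (Equiv.refl _)).trans
      (Equiv.sumCompl (· ∈ Set.range κ))
  obtain ⟨F, hF0, hF⟩ := liesOnHypersurface_linearSystem_of_isUnit_det (K := K) hκ
    (H.submatrix id (Subtype.val : {b // b ∉ Set.range κ} → B)) f hcard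
  refine ⟨rename e F, fun h => hF0 (rename_injective _ e.injective (by rw [h, map_zero])),
    fun t ⟨ψ, l, hsys⟩ => ?_⟩
  rw [eval_rename]
  refine hF _ ⟨ψ, l, hsys ▸ ?_⟩
  have : Matrix.fromCols (H.submatrix id κ) (H.submatrix id Subtype.val) = H.submatrix id e := by
    ext i (j | j) <;> simp [e]
  rw [this]
  funext j
  exact Fintype.sum_equiv e _ _ fun b => rfl

theorem liesOnHypersurface_linearSystem_of_det_ne_zero [Algebra.FiniteType K A]
    (H : Matrix J B A) (f : Matrix J S A) (κ : J ↪ B)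
    (hcard : Nat.card S + natTrdeg K A < Nat.card J) :
    LiesOnHypersurface {t : B → K | ∃ (ψ : A →ₐ[K] K) (l : S → K),
      ((H.map ψ).submatrix id κ).det ≠ 0 ∧ H.map ψ *ᵥ t = f.map ψ *ᵥ l} := by
  set δ := (H.submatrix id κ).det
  have hψδ (ψ : A →ₐ[K] K) : ((H.map ψ).submatrix id κ).det = ψ δ := (AlgHom.map_det ψ _).symm
  by_cases h0 : δ = 0
  · exact ⟨1, one_ne_zero, fun t ⟨ψ, _, h, _⟩ => absurd (by rw [hψδ, h0, map_zero]) h⟩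
  have : IsDomain (Localization.Away δ) :=
    IsLocalization.isDomain_localization (powers_le_nonZeroDivisors_of_noZeroDivisors h0)
  have : Algebra.FiniteType K (Localization.Away δ) := inferInstance
  let c := IsScalarTower.toAlgHom K A (Localization.Away δ)
  obtain ⟨F, hF0, hF⟩ := liesOnHypersurface_linearSystem_of_isUnit_det_submatrix (K := K)
    (H.map c) (f.map c) κ (by
      rw [show ((H.map c).submatrix id κ).det = c δ from (AlgHom.map_det c _).symm]
      exact IsLocalization.Away.algebraMap_isUnit δ) (by rwa [natTrdeg_localizationAway h0])
  refine ⟨F, hF0, fun t ⟨ψ, l, hdet, hsys⟩ => hF t ?_⟩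
  have hunit : ∀ y : Submonoid.powers δ, IsUnit (ψ y) := by
    rintro ⟨_, m, rfl⟩
    simpa only [map_pow] using (isUnit_iff_ne_zero.2 (hψδ ψ ▸ hdet)).pow m
  let Ψ : Localization.Away δ →ₐ[K] K := IsLocalization.liftAlgHom hunit
  have hΨ (x) : Ψ (c x) = ψ x := IsLocalization.lift_eq _ x
  refine ⟨Ψ, l, ?_⟩
  simpa only [Matrix.map_map, Function.comp_def, hΨ] using hsys

theorem exists_det_submatrix_ne_zero {H : Matrix J B K} (hH : Function.Surjective H.mulVec) :
    ∃ κ : J ↪ B, (H.submatrix id κ).det ≠ 0 := by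
  have htop : Submodule.span K (Set.range H.col) = ⊤ := by
    rw [← Matrix.range_mulVecLin, LinearMap.range_eq_top]
    exact hH
  obtain ⟨γ, κ, hκ, hspan, hli⟩ := exists_linearIndependent' K H.col
  let c := Module.Basis.mk hli (by rw [hspan, htop])
  have e : J ≃ γ := (Pi.basisFun K J).indexEquiv c
  refine ⟨e.toEmbedding.trans ⟨κ, hκ⟩, ?_⟩
  have : LinearIndependent K (H.submatrix id (κ ∘ e)).col := hli.comp e e.injective
  exact ((Matrix.isUnit_iff_isUnit_det _).1
    (Matrix.linearIndependent_cols_iff_isUnit.1 this)).ne_zero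

theorem liesOnHypersurface_linearSystem_of_surjective [Algebra.FiniteType K A]
    {J : Type*} [Finite J] (H : Matrix J B A) (f : Matrix J S A)
    (hcard : Nat.card S + natTrdeg K A < Nat.card J) :
    LiesOnHypersurface {t : B → K | ∃ (ψ : A →ₐ[K] K) (l : S → K),
      Function.Surjective (H.map ψ).mulVec ∧ H.map ψ *ᵥ t = f.map ψ *ᵥ l} := by
  classical
  have := Fintype.ofFinite J
  refine (LiesOnHypersurface.iUnion fun κ =>
    liesOnHypersurface_linearSystem_of_det_ne_zero H f κ hcard).mono ?_
  rintro t ⟨ψ, l, hψ, hsys⟩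
  obtain ⟨κ, hκ⟩ := exists_det_submatrix_ne_zero hψ
  exact Set.mem_iUnion.2 ⟨κ, ψ, l, hκ, hsys⟩

end SpecializedSystems

section Gradients

attribute [local instance] MvPolynomial.gradedAlgebra

variable {I J : Ideal (MvPolynomial (Fin (n + 1)) k)} {v : Fin (n + 1) → k}

/-- The gradient at `v` as a linear map of the polynomial. -/
noncomputable def gradientMap (v : Fin (n + 1) → k) :
    MvPolynomial (Fin (n + 1)) k →ₗ[k] (Fin (n + 1) → k) where
  toFun f := gradientAt f v
  map_add' f g := funext fun j => by simp [gradientAt]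
  map_smul' c f := funext fun j => by simp [gradientAt, smul_eval]

/-- The space of gradients at `v` of the elements of `I`, that is, of the equations of the Zariski
tangent space at `v` of the affine scheme cut out by `I`. -/
noncomputable def conormalSpace (I : Ideal (MvPolynomial (Fin (n + 1)) k)) (v : Fin (n + 1) → k) :
    Submodule k (Fin (n + 1) → k) :=
  (I.restrictScalars k).map (gradientMap v)

theorem gradientMap_mul (f g : MvPolynomial (Fin (n + 1)) k) :
    gradientMap v (f * g) = eval v f • gradientMap v g + eval v g • gradientMap v f := by
  funext j
  simp [gradientMap, gradientAt]

theorem gradientMap_pow (f : MvPolynomial (Fin (n + 1)) k) (m : ℕ) :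
    gradientMap v (f ^ m) = (m * eval v f ^ (m - 1)) • gradientMap v f := by
  funext j
  simp [gradientMap, gradientAt, mul_assoc]

theorem gradientMap_smul_of_isHomogeneous {f : MvPolynomial (Fin (n + 1)) k} {e : ℕ}
    (hf : f.IsHomogeneous e) (c : k) (v : Fin (n + 1) → k) :
    gradientMap (c • v) f = c ^ (e - 1) • gradientMap v f :=
  funext fun _ => eval_smul_of_isHomogeneous hf.pderiv c v

theorem conormalSpace_sup : conormalSpace (I ⊔ J) v = conormalSpace I v ⊔ conormalSpace J v := by
  rw [conormalSpace, Submodule.restrictScalars_sup, Submodule.map_sup]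
  rfl

theorem conormalSpace_span {G : Set (MvPolynomial (Fin (n + 1)) k)} (hG : ∀ g ∈ G, eval v g = 0) :
    conormalSpace (Ideal.span G) v = Submodule.span k (gradientMap v '' G) := by
  refine le_antisymm ?_ (Submodule.span_le.2 ?_)
  · rintro _ ⟨f, hf, rfl⟩
    induction hf using Submodule.span_induction with
    | mem g hg => exact Submodule.subset_span ⟨g, hg, rfl⟩
    | zero => exact map_zero (gradientMap v) ▸ zero_mem _
    | add f g _ _ hf hg => exact map_add (gradientMap v) f g ▸ add_mem hf hg
    | smul p f hf ih =>
      have hfv : eval v f = 0 :=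
        (Ideal.span_le (I := RingHom.ker (eval v))).2 hG hf
      rw [smul_eq_mul, gradientMap_mul, hfv, zero_smul, add_zero]
      exact Submodule.smul_mem _ _ ih
  · rintro _ ⟨g, hg, rfl⟩
    exact ⟨g, Ideal.subset_span hg, rfl⟩

theorem conormalSpace_sup_span_singleton {h : MvPolynomial (Fin (n + 1)) k} (hv : eval v h = 0) :
    conormalSpace (I ⊔ Ideal.span {h}) v =
      conormalSpace I v ⊔ Submodule.span k {gradientMap v h} := by
  rw [conormalSpace_sup, conormalSpace_span (by simpa using hv), Set.image_singleton]

theorem conormalSpace_eq_span_of_isHomogeneous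
    (hI : I.IsHomogeneous (homogeneousSubmodule (Fin (n + 1)) k)) :
    conormalSpace I v =
      Submodule.span k {w | ∃ f ∈ I, (∃ e, f.IsHomogeneous e) ∧ w = gradientAt f v} := by
  refine le_antisymm ?_ (Submodule.span_le.2 ?_)
  · rintro _ ⟨f, hf, rfl⟩
    rw [← sum_homogeneousComponent f, map_sum]
    exact Submodule.sum_mem _ fun e _ => Submodule.subset_span
      ⟨_, isHomogeneous_iff_homogeneousComponent_mem.1 hI f hf e,
        ⟨e, homogeneousComponent_isHomogeneous e f⟩, rfl⟩
  · rintro _ ⟨f, hf, -, rfl⟩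
    exact ⟨f, hf, rfl⟩

theorem span_gradientAt_homVanishingPolys [Infinite k] (S : Set (ProjPt k n)) :
    Submodule.span k {w | ∃ h ∈ homVanishingPolys S, w = gradientAt h v} =
      conormalSpace (projVanishingIdeal S) v := by
  rw [conormalSpace_eq_span_of_isHomogeneous (isHomogeneous_projVanishingIdeal S)]
  congr! 5 with w h
  exact ⟨fun ⟨⟨he, h0⟩, hw⟩ => ⟨fun v hv hS => h0 _ hS v hv rfl, he, hw⟩, fun ⟨h0, he, hw⟩ =>
    ⟨⟨he, fun x hx v hv hvx => h0 v hv (hvx ▸ hx)⟩, hw⟩⟩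

theorem conormalSpace_smul (hI : I.IsHomogeneous (homogeneousSubmodule (Fin (n + 1)) k)) {c : k}
    (hc : c ≠ 0) (v : Fin (n + 1) → k) : conormalSpace I (c • v) = conormalSpace I v := by
  have hle (c : k) (v : Fin (n + 1) → k) : conormalSpace I (c • v) ≤ conormalSpace I v := by
    rw [conormalSpace_eq_span_of_isHomogeneous hI, Submodule.span_le]
    rintro _ ⟨f, hf, ⟨e, he⟩, rfl⟩
    change gradientMap (c • v) f ∈ conormalSpace I v
    rw [gradientMap_smul_of_isHomogeneous he]
    exact Submodule.smul_mem _ _ ⟨f, hf, rfl⟩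
  exact (hle c v).antisymm (by simpa only [inv_smul_smul₀ hc] using hle c⁻¹ (c • v))

/-- The linear form with the given coefficients. -/
noncomputable def linearForm : (Fin (n + 1) → k) →ₗ[k] MvPolynomial (Fin (n + 1)) k :=
  Fintype.linearCombination k X

theorem isHomogeneous_linearForm (w : Fin (n + 1) → k) : (linearForm w).IsHomogeneous 1 :=
  IsHomogeneous.sum _ _ _ fun i _ => smul_eq_C_mul (X i : MvPolynomial _ k) (w i) ▸
    isHomogeneous_C_mul_X (w i) i

theorem eval_linearForm (w : Fin (n + 1) → k) : eval v (linearForm w) = w ⬝ᵥ v := by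
  simp [linearForm, Fintype.linearCombination_apply, dotProduct, smul_eval]

theorem gradientMap_linearForm (w : Fin (n + 1) → k) : gradientMap v (linearForm w) = w := by
  funext j
  simp [gradientMap, gradientAt, linearForm, Fintype.linearCombination_apply, pderiv_X,
    Pi.single_apply]

/-- The hypersurface `h = 0` and the affine zero locus of `I` meet at `v`, and not transversally. -/
def TangentAt (I : Ideal (MvPolynomial (Fin (n + 1)) k)) (h : MvPolynomial (Fin (n + 1)) k)
    (v : Fin (n + 1) → k) : Prop :=
  (∀ g ∈ I, eval v g = 0) ∧ eval v h = 0 ∧ gradientMap v h ∈ conormalSpace I v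

theorem TangentAt.smul {h : MvPolynomial (Fin (n + 1)) k} (ht : TangentAt I h v) (c : k) :
    TangentAt I (c • h) v :=
  ⟨ht.1, by rw [smul_eval, ht.2.1, mul_zero],
    (map_smul (gradientMap v) c h).symm ▸ Submodule.smul_mem _ c ht.2.2⟩

theorem TangentAt.smul_point (hI : I.IsHomogeneous (homogeneousSubmodule (Fin (n + 1)) k))
    {h : MvPolynomial (Fin (n + 1)) k} {a : ℕ} (hh : h.IsHomogeneous a) (ht : TangentAt I h v)
    {c : k} (hc : c ≠ 0) : TangentAt I h (c • v) := by
  refine ⟨fun g hg => ?_, ?_, ?_⟩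
  · rw [← sum_homogeneousComponent g, map_sum]
    refine Finset.sum_eq_zero fun e _ => ?_
    rw [eval_smul_of_isHomogeneous (homogeneousComponent_isHomogeneous e g),
      ht.1 _ (isHomogeneous_iff_homogeneousComponent_mem.1 hI g hg e), mul_zero]
  · rw [eval_smul_of_isHomogeneous hh, ht.2.1, mul_zero]
  · rw [conormalSpace_smul hI hc, gradientMap_smul_of_isHomogeneous hh]
    exact Submodule.smul_mem _ _ ht.2.2

end Gradients

section Tangency

open Matrix

attribute [local instance] MvPolynomial.gradedAlgebra

theorem exists_dotProduct_eq_one {K ι : Type*} [Field K] [Fintype ι]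
    {N : Submodule K (ι → K)} {u : ι → K} (hu : u ∉ N) :
    ∃ w : ι → K, (∀ x ∈ N, w ⬝ᵥ x = 0) ∧ w ⬝ᵥ u = 1 := by
  classical
  obtain ⟨φ, hφ, hN⟩ := Submodule.exists_le_ker_of_notMem hu
  have h (x : ι → K) : (dotProductEquiv K ι).symm φ ⬝ᵥ x = φ x :=
    LinearMap.congr_fun ((dotProductEquiv K ι).apply_symm_apply φ) x
  refine ⟨(φ u)⁻¹ • (dotProductEquiv K ι).symm φ, fun x hx => ?_, ?_⟩
  · rw [smul_dotProduct, h, LinearMap.mem_ker.1 (hN hx), smul_zero]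
  · rw [smul_dotProduct, h, smul_eq_mul, inv_mul_cancel₀ hφ]

/-- The value and the partial derivatives other than the `j`-th one, the value being placed at
index `j`: the 1-jet of `h` in the chart `X j = 1`. -/
noncomputable def chartJet (j : Fin (n + 1)) :
    MvPolynomial (Fin (n + 1)) k →ₗ[k] (Fin (n + 1) → MvPolynomial (Fin (n + 1)) k) :=
  LinearMap.pi fun i => if i = j then LinearMap.id else (pderiv i).toLinearMap

variable {I r : Ideal (MvPolynomial (Fin (n + 1)) k)} {h : MvPolynomial (Fin (n + 1)) k}
  {v v₀ : Fin (n + 1) → k} {j : Fin (n + 1)} {a : ℕ}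

theorem chartJet_self : chartJet j h j = h := by
  simp [chartJet]

theorem eval_chartJet_of_ne {i : Fin (n + 1)} (hij : i ≠ j) :
    eval v (chartJet j h i) = gradientMap v h i := by
  simp [chartJet, hij, gradientMap, gradientAt]

/- The form is `l ^ (a - 1) * m` with `l` vanishing at `v₀` but not at `v`. -/
theorem exists_isHomogeneous_eval_chartJet_eq (ha : 1 < a) (hj : v j = 1)
    (hv : v ∉ Submodule.span k {v₀}) (u : Fin (n + 1) → k) :
    ∃ h : MvPolynomial (Fin (n + 1)) k, h.IsHomogeneous a ∧ eval v₀ h = 0 ∧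
      (fun i => eval v (chartJet j h i)) = u := by
  obtain ⟨w, hw₀, hw⟩ := exists_dotProduct_eq_one hv
  let x : Fin (n + 1) → k := u - ((a - 1 : ℕ) * u j) • w
  let m : Fin (n + 1) → k := x + (u j - x ⬝ᵥ v) • Pi.single j 1
  have hm : m ⬝ᵥ v = u j := by
    rw [add_dotProduct, smul_dotProduct, single_dotProduct, hj, smul_eq_mul]
    ring
  have hlv : eval v (linearForm w) = 1 := by rw [eval_linearForm, hw]
  refine ⟨linearForm w ^ (a - 1) * linearForm m, ?_, ?_, funext fun i => ?_⟩
  · have := ((isHomogeneous_linearForm w).pow (a - 1)).mul (isHomogeneous_linearForm m)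
    rwa [one_mul, Nat.sub_add_cancel ha.le] at this
  · rw [map_mul, map_pow, eval_linearForm, hw₀ _ (Submodule.mem_span_singleton_self v₀),
      zero_pow (Nat.sub_ne_zero_of_lt ha), zero_mul]
  · rcases eq_or_ne i j with rfl | hij
    · rw [chartJet_self, map_mul, map_pow, hlv, one_pow, one_mul, eval_linearForm, hm]
    · rw [eval_chartJet_of_ne hij, gradientMap_mul, gradientMap_pow, gradientMap_linearForm,
        gradientMap_linearForm, map_pow, hlv, eval_linearForm, hm]
      simp [m, x, hij]
      ring

theorem exists_isHomogeneous_gradientMap_eq (ha : 1 < a) (hv : v ≠ 0) {u : Fin (n + 1) → k}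
    (hu : u ⬝ᵥ v = 0) :
    ∃ h : MvPolynomial (Fin (n + 1)) k, h.IsHomogeneous a ∧ eval v h = 0 ∧
      gradientMap v h = u := by
  obtain ⟨w, -, hw⟩ := exists_dotProduct_eq_one (N := ⊥) hv
  have hlv : eval v (linearForm w) = 1 := by rw [eval_linearForm, hw]
  have huv : eval v (linearForm u) = 0 := by rw [eval_linearForm, hu]
  refine ⟨linearForm w ^ (a - 1) * linearForm u, ?_, ?_, ?_⟩
  · have := ((isHomogeneous_linearForm w).pow (a - 1)).mul (isHomogeneous_linearForm u)
    rwa [one_mul, Nat.sub_add_cancel ha.le] at this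
  · rw [map_mul, huv, mul_zero]
  · rw [gradientMap_mul, huv, map_pow, hlv, gradientMap_linearForm, one_pow, one_smul, zero_smul,
      add_zero]

variable {B S : Type*} [Fintype B]

/-- The matrix of 1-jets in the chart `X j = 1` of a family of polynomials, with entries restricted
to the zero locus of `r`. -/
noncomputable def chartJetMatrix (r : Ideal (MvPolynomial (Fin (n + 1)) k)) (j : Fin (n + 1))
    (b : B → MvPolynomial (Fin (n + 1)) k) :
    Matrix (Fin (n + 1)) B (MvPolynomial (Fin (n + 1)) k ⧸ r) :=
  Matrix.of fun i x => Ideal.Quotient.mk r (chartJet j (b x) i)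

theorem chartJetMatrix_map_mulVec (b : B → MvPolynomial (Fin (n + 1)) k)
    {ψ : (MvPolynomial (Fin (n + 1)) k ⧸ r) →ₐ[k] k}
    (hψ : ∀ f, ψ (Ideal.Quotient.mk r f) = eval v f) (t : B → k) :
    (chartJetMatrix r j b).map ψ *ᵥ t =
      fun i => eval v (chartJet j (Fintype.linearCombination k b t) i) := by
  funext i
  simp [chartJetMatrix, mulVec, dotProduct, Fintype.linearCombination_apply, hψ, smul_eval,
    mul_comm]

theorem eval_chartJet_eq_of_gradientMap_eq {g : MvPolynomial (Fin (n + 1)) k}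
    (hval : eval v h = eval v g) (hgrad : gradientMap v h = gradientMap v g) :
    (fun i => eval v (chartJet j h i)) = fun i => eval v (chartJet j g i) := by
  funext i
  rcases eq_or_ne i j with rfl | hij
  · rw [chartJet_self, chartJet_self, hval]
  · rw [eval_chartJet_of_ne hij, eval_chartJet_of_ne hij, hgrad]

theorem liesOnHypersurface_tangent_of_isPrime [Finite S] [r.IsPrime]
    (hcard : Nat.card S + natTrdeg k (MvPolynomial (Fin (n + 1)) k ⧸ r) < n + 1) (ha : 1 < a)
    (j : Fin (n + 1)) {b : B → MvPolynomial (Fin (n + 1)) k}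
    (hb : ∀ h : MvPolynomial (Fin (n + 1)) k, h.IsHomogeneous a → eval v₀ h = 0 →
      h ∈ Submodule.span k (Set.range b))
    (s : S → MvPolynomial (Fin (n + 1)) k) :
    LiesOnHypersurface {t : B → k | ∃ v, v j = 1 ∧ v ∉ Submodule.span k {v₀} ∧
      (∀ g ∈ r, eval v g = 0) ∧ (∀ x, eval v (s x) = 0) ∧
      eval v (Fintype.linearCombination k b t) = 0 ∧
      gradientMap v (Fintype.linearCombination k b t) ∈
        Submodule.span k (Set.range (gradientMap v ∘ s))} := by
  have := Fintype.ofFinite S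
  refine (liesOnHypersurface_linearSystem_of_surjective (chartJetMatrix r j b)
    (chartJetMatrix r j s) (by rwa [Nat.card_fin])).mono ?_
  rintro t ⟨v, hj, hv, hr, hs, ht, hmem⟩
  obtain ⟨l, hl⟩ := Submodule.mem_span_range_iff_exists_fun k |>.1 hmem
  let ψ : (MvPolynomial (Fin (n + 1)) k ⧸ r) →ₐ[k] k := Ideal.Quotient.liftₐ r (aeval v) hr
  have hψ (f) : ψ (Ideal.Quotient.mk r f) = eval v f := rfl
  refine ⟨ψ, l, fun u => ?_, ?_⟩
  · obtain ⟨h, hh, hh₀, hu⟩ := exists_isHomogeneous_eval_chartJet_eq ha hj hv u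
    obtain ⟨c, rfl⟩ := Submodule.mem_span_range_iff_exists_fun k |>.1 (hb h hh hh₀)
    exact ⟨c, (chartJetMatrix_map_mulVec b hψ c).trans hu⟩
  · rw [chartJetMatrix_map_mulVec b hψ, chartJetMatrix_map_mulVec s hψ]
    refine eval_chartJet_eq_of_gradientMap_eq ?_ ?_
    · rw [ht]
      simp [Fintype.linearCombination_apply, smul_eval, hs]
    · rw [← hl, Fintype.linearCombination_apply, map_sum]
      simp only [map_smul, Function.comp_apply]

theorem exists_conormalSpace_span_eq {G : Set (MvPolynomial (Fin (n + 1)) k)}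
    (hG : ∀ g ∈ G, eval v g = 0) {c : ℕ}
    (hc : Module.finrank k (conormalSpace (Ideal.span G) v) = c) :
    ∃ s : Fin c → G, conormalSpace (Ideal.span G) v =
      Submodule.span k (Set.range (gradientMap v ∘ Subtype.val ∘ s)) := by
  rw [conormalSpace_span hG] at hc ⊢
  subst hc
  obtain ⟨f, hf, hspan, -⟩ := Submodule.exists_fun_fin_finrank_span_eq k (gradientMap v '' G)
  choose s hs hsf using hf
  exact ⟨fun x => ⟨s x, hs x⟩, hspan.symm.trans (congrArg _ (congrArg _ (funext hsf).symm))⟩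

theorem natTrdeg_quotient_lt_of_mem_minimalPrimes_chart [I.IsPrime]
    (hI : I.IsHomogeneous (homogeneousSubmodule (Fin (n + 1)) k))
    (hr : r ∈ (I ⊔ Ideal.span {X j - 1}).minimalPrimes) :
    natTrdeg k (MvPolynomial (Fin (n + 1)) k ⧸ r) <
      natTrdeg k (MvPolynomial (Fin (n + 1)) k ⧸ I) := by
  have := hr.1.1
  have hle := sup_le_iff.1 hr.1.2
  refine natTrdeg_quotient_lt_of_lt (hle.1.lt_of_not_ge fun hrI => ?_)
  have hmem : (X j - 1 : MvPolynomial (Fin (n + 1)) k) ∈ I :=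
    hrI (hle.2 (Ideal.mem_span_singleton_self _))
  have := le_idealOfVars_of_isHomogeneous hI (Ideal.IsPrime.ne_top ‹_›) hmem
  simp [mem_idealOfVars_iff_eval_zero] at this

theorem liesOnHypersurface_tangentAt_chart [I.IsPrime]
    (hI : I.IsHomogeneous (homogeneousSubmodule (Fin (n + 1)) k)) {c : ℕ}
    (hdim : natTrdeg k (MvPolynomial (Fin (n + 1)) k ⧸ I) + c ≤ n + 1)
    (hrank : ∀ v ≠ 0, (∀ g ∈ I, eval v g = 0) → Module.finrank k (conormalSpace I v) = c)
    (ha : 1 < a) (j : Fin (n + 1)) {b : B → MvPolynomial (Fin (n + 1)) k}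
    (hb : ∀ h : MvPolynomial (Fin (n + 1)) k, h.IsHomogeneous a → eval v₀ h = 0 →
      h ∈ Submodule.span k (Set.range b)) :
    LiesOnHypersurface {t : B → k | ∃ v, v j = 1 ∧ v ∉ Submodule.span k {v₀} ∧
      TangentAt I (Fintype.linearCombination k b t) v} := by
  obtain ⟨G, rfl⟩ := IsNoetherian.noetherian I
  let J := Ideal.span (G : Set (MvPolynomial (Fin (n + 1)) k)) ⊔ Ideal.span {X j - 1}
  have : Finite J.minimalPrimes := (Ideal.finite_minimalPrimes_of_isNoetherianRing _ J).to_subtype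
  have hprime (r : J.minimalPrimes) : r.1.IsPrime := r.2.1.1
  have hcard (r : J.minimalPrimes) :
      Nat.card (Fin c) + natTrdeg k (MvPolynomial (Fin (n + 1)) k ⧸ r.1) < n + 1 := by
    have := natTrdeg_quotient_lt_of_mem_minimalPrimes_chart hI r.2
    rw [Nat.card_fin]
    lia
  refine (LiesOnHypersurface.iUnion fun i : J.minimalPrimes × (Fin c → G) =>
    liesOnHypersurface_tangent_of_isPrime (hcard i.1) ha j hb (Subtype.val ∘ i.2)).mono ?_
  rintro t ⟨v, hj, hv, hIv, hval, hgrad⟩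
  have hG : ∀ g ∈ (G : Set _), eval v g = 0 := fun g hg => hIv g (Ideal.subset_span hg)
  obtain ⟨s, hs⟩ := exists_conormalSpace_span_eq hG (hrank v (fun h => by simp [h] at hj) hIv)
  have hJ : J ≤ RingHom.ker (eval v) := by
    refine sup_le hIv ((Ideal.span_singleton_le_iff_mem _).2 ?_)
    simp [hj]
  have : (RingHom.ker (eval v)).IsPrime := RingHom.ker_isPrime _
  obtain ⟨r, hr, hrv⟩ := Ideal.exists_minimalPrimes_le hJ
  exact Set.mem_iUnion.2 ⟨⟨⟨r, hr⟩, s⟩, v, hj, hv, fun g hg => hrv hg, fun x => hG _ (s x).2, hval,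
    hs ▸ hgrad⟩

end Tangency

section GenericTransversality

attribute [local instance] MvPolynomial.gradedAlgebra

variable {I : Ideal (MvPolynomial (Fin (n + 1)) k)} {v₀ : Fin (n + 1) → k} {a c : ℕ}

/-- The space of forms of degree `a` vanishing at `v₀`. -/
noncomputable def formsThrough (a : ℕ) (v₀ : Fin (n + 1) → k) :
    Submodule k (MvPolynomial (Fin (n + 1)) k) :=
  homogeneousSubmodule (Fin (n + 1)) k a ⊓ LinearMap.ker (aeval v₀).toLinearMap

theorem mem_formsThrough {h : MvPolynomial (Fin (n + 1)) k} :
    h ∈ formsThrough a v₀ ↔ h.IsHomogeneous a ∧ eval v₀ h = 0 :=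
  Iff.rfl

instance finiteDimensional_formsThrough (a : ℕ) (v₀ : Fin (n + 1) → k) :
    FiniteDimensional k (formsThrough a v₀) :=
  have : FiniteDimensional k (homogeneousSubmodule (Fin (n + 1)) k a) :=
    Module.Finite.iff_fg.2 (homogeneousSubmodule_fg _ _ a)
  Submodule.finiteDimensional_of_le inf_le_left

theorem liesOnHypersurface_submodule {K ι : Type*} [Field K] [Finite ι]
    {N : Submodule K (ι → K)} (hN : N ≠ ⊤) : LiesOnHypersurface (N : Set (ι → K)) := by
  have := Fintype.ofFinite ι
  obtain ⟨u, -, hu⟩ := SetLike.exists_of_lt hN.lt_top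
  obtain ⟨w, hw, hwu⟩ := exists_dotProduct_eq_one hu
  have heval (x : ι → K) : eval x (∑ i, C (w i) * X i) = w ⬝ᵥ x := by
    simp [dotProduct]
  refine ⟨∑ i, C (w i) * X i, fun h0 => ?_, fun x hx => by rw [heval, hw x hx]⟩
  exact zero_ne_one (by rw [← hwu, ← heval, h0, map_zero])

theorem exists_dotProduct_eq_zero_notMem {N : Submodule k (Fin (n + 1) → k)} (hv₀ : v₀ ≠ 0)
    (hN : Module.finrank k N < n) : ∃ u, u ⬝ᵥ v₀ = 0 ∧ u ∉ N := by
  by_contra! h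
  have hφ : dotProductEquiv k (Fin (n + 1)) v₀ ≠ 0 :=
    (dotProductEquiv k (Fin (n + 1))).map_ne_zero_iff.2 hv₀
  have hle : LinearMap.ker (dotProductEquiv k (Fin (n + 1)) v₀) ≤ N := fun u hu =>
    h u ((dotProduct_comm u v₀).trans hu)
  have hker := Module.Dual.finrank_ker_add_one_of_ne_zero hφ
  rw [Module.finrank_fin_fun] at hker
  have := Submodule.finrank_mono hle
  lia

theorem liesOnHypersurface_tangentAt_self {B : Type*} [Fintype B] (ha : 1 < a) (hv₀ : v₀ ≠ 0)
    (hc : Module.finrank k (conormalSpace I v₀) < n) {b : B → MvPolynomial (Fin (n + 1)) k}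
    (hb : Submodule.span k (Set.range b) = formsThrough a v₀) :
    LiesOnHypersurface {t : B → k | TangentAt I (Fintype.linearCombination k b t) v₀} := by
  obtain ⟨u, huv, hu⟩ := exists_dotProduct_eq_zero_notMem hv₀ hc
  obtain ⟨h, hh, hhv, rfl⟩ := exists_isHomogeneous_gradientMap_eq ha hv₀ huv
  obtain ⟨t, rfl⟩ := Submodule.mem_span_range_iff_exists_fun k |>.1
    (hb ▸ mem_formsThrough.2 ⟨hh, hhv⟩)
  refine (liesOnHypersurface_submodule (N := (conormalSpace I v₀).comap
    (gradientMap v₀ ∘ₗ Fintype.linearCombination k b)) fun htop => hu ?_).mono fun s hs => hs.2.2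
  exact Submodule.mem_comap.1 (htop ▸ Submodule.mem_top : t ∈ _)

theorem liesOnHypersurface_tangentAt {B : Type*} [Fintype B] [I.IsPrime]
    (hI : I.IsHomogeneous (homogeneousSubmodule (Fin (n + 1)) k))
    (hdim : natTrdeg k (MvPolynomial (Fin (n + 1)) k ⧸ I) + c ≤ n + 1) (hc : c < n)
    (hrank : ∀ v ≠ 0, (∀ g ∈ I, eval v g = 0) → Module.finrank k (conormalSpace I v) = c)
    (ha : 1 < a) (hv₀ : v₀ ≠ 0) (hv₀I : ∀ g ∈ I, eval v₀ g = 0)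
    {b : B → MvPolynomial (Fin (n + 1)) k}
    (hb : Submodule.span k (Set.range b) = formsThrough a v₀) :
    LiesOnHypersurface
      {t : B → k | ∃ v ≠ 0, TangentAt I (Fintype.linearCombination k b t) v} := by
  have hself := liesOnHypersurface_tangentAt_self ha hv₀ ((hrank v₀ hv₀ hv₀I).trans_lt hc) hb
  have hchart (j) := liesOnHypersurface_tangentAt_chart hI hdim hrank ha j fun h hh hhv =>
    hb ▸ mem_formsThrough.2 ⟨hh, hhv⟩
  refine (hself.union (LiesOnHypersurface.iUnion hchart)).mono ?_
  rintro t ⟨v, hv, htan⟩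
  have hhom : (Fintype.linearCombination k b t).IsHomogeneous a :=
    (mem_formsThrough.1 (hb ▸ Submodule.mem_span_range_iff_exists_fun k |>.2 ⟨t, rfl⟩)).1
  by_cases hspan : v ∈ Submodule.span k {v₀}
  · obtain ⟨x, rfl⟩ := Submodule.mem_span_singleton.1 hspan
    have hx : x ≠ 0 := left_ne_zero_of_smul hv
    exact Or.inl (inv_smul_smul₀ hx v₀ ▸ htan.smul_point hI hhom (inv_ne_zero hx))
  · obtain ⟨j, hj⟩ := Function.ne_iff.1 hv
    refine Or.inr (Set.mem_iUnion.2 ⟨j, (v j)⁻¹ • v, inv_mul_cancel₀ hj, ?_,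
      htan.smul_point hI hhom (inv_ne_zero hj)⟩)
    rwa [Submodule.smul_mem_iff _ (inv_ne_zero hj)]

theorem exists_isZClosed_isCone_of_liesOnHypersurface [Infinite k] {V : Type} [AddCommGroup V]
    [Module k V] {W : Submodule k V} {m : ℕ} (b : Module.Basis (Fin m) k W) {s : Set V}
    (hs : ∀ (x : k), ∀ w ∈ s, x • w ∈ s)
    (hbs : LiesOnHypersurface
      {t : Fin m → k | Fintype.linearCombination k (fun i => (b i : V)) t ∈ s}) :
    ∃ Z : Set V, IsZClosed k Z ∧ IsCone k Z ∧ (∃ w ∈ W, w ∉ Z) ∧ ∀ w ∈ W, w ∉ Z → w ∉ s := by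
  obtain ⟨F, hF, hFs⟩ := hbs
  obtain ⟨p, hp⟩ := LinearMap.exists_leftInverse_of_injective W.subtype W.ker_subtype
  let φ : V →ₗ[k] Fin m → k := b.equivFun.toLinearMap ∘ₗ p
  have hφ (w : W) : φ w = b.equivFun w := congrArg b.equivFun (LinearMap.congr_fun hp w)
  have hlc (t : Fin m → k) :
      Fintype.linearCombination k (fun i => (b i : V)) t = b.equivFun.symm t := by
    simp [Fintype.linearCombination_apply, b.equivFun_symm_apply]
  refine ⟨{w | ∀ x : k, eval (φ (x • w)) F = 0}, ?_, fun x w hw y => ?_, ?_, ?_⟩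
  · refine ⟨Set.range fun (x : k) w => eval (φ (x • w)) F, ?_, by
      simp only [Set.forall_mem_range]⟩
    rintro _ ⟨x, rfl⟩
    exact ⟨m, fun i => x • LinearMap.proj i ∘ₗ φ, F, funext fun w => by
      simp only [map_smul]
      rfl⟩
  · rw [← mul_smul]
    exact hw _
  · obtain ⟨t, ht⟩ : ∃ t, eval t F ≠ 0 := by
      by_contra! h
      exact hF (MvPolynomial.funext fun t => by rw [h, map_zero])
    refine ⟨b.equivFun.symm t, Subtype.prop _, fun hZ => ht ?_⟩
    simpa only [one_smul, hφ, LinearEquiv.apply_symm_apply] using hZ 1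
  · refine fun w hw => mt fun hws x => hFs _ ?_
    have := hφ (x • ⟨w, hw⟩)
    rw [Set.mem_ofPred_eq, hlc, show φ (x • w) = _ from this, LinearEquiv.symm_apply_apply]
    exact hs x w hws

theorem exists_isZClosed_isCone_forall_not_tangentAt [Infinite k] [I.IsPrime]
    (hI : I.IsHomogeneous (homogeneousSubmodule (Fin (n + 1)) k))
    (hdim : natTrdeg k (MvPolynomial (Fin (n + 1)) k ⧸ I) + c ≤ n + 1) (hc : c < n)
    (hrank : ∀ v ≠ 0, (∀ g ∈ I, eval v g = 0) → Module.finrank k (conormalSpace I v) = c)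
    (ha : 1 < a) (hv₀ : v₀ ≠ 0) (hv₀I : ∀ g ∈ I, eval v₀ g = 0) :
    ∃ Z : Set (MvPolynomial (Fin (n + 1)) k), IsZClosed k Z ∧ IsCone k Z ∧
      (∃ h ∈ formsThrough a v₀, h ∉ Z) ∧
      ∀ h ∈ formsThrough a v₀, h ∉ Z → ∀ v ≠ 0, ¬ TangentAt I h v := by
  let b := Module.finBasis k (formsThrough a v₀)
  have hb : Submodule.span k (Set.range fun i => (b i : MvPolynomial (Fin (n + 1)) k)) =
      formsThrough a v₀ := by
    have := congrArg (Submodule.map (formsThrough a v₀).subtype) b.span_eq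
    rwa [Submodule.map_span, ← Set.range_comp, Submodule.map_subtype_top] at this
  have hbad := liesOnHypersurface_tangentAt hI hdim hc hrank ha hv₀ hv₀I hb
  obtain ⟨Z, hZ, hcone, hne, hZbad⟩ := exists_isZClosed_isCone_of_liesOnHypersurface b
    (s := {h | ∃ v ≠ 0, TangentAt I h v}) (fun x _ ⟨v, hv, ht⟩ => ⟨v, hv, ht.smul x⟩) hbad
  exact ⟨Z, hZ, hcone, hne, fun h hh hhZ v hv ht => hZbad h hh hhZ ⟨v, hv, ht⟩⟩

end GenericTransversality

section LocalRings

open IsLocalRing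

theorem isRegularLocalRing_atPrime_of_le_sup_sq {A : Type*} [CommRing A] [IsNoetherianRing A]
    {M : Ideal A} [M.IsPrime] {e : ℕ} {y : Fin e → A} (hy : ∀ i, y i ∈ M)
    (hM : M ≤ Ideal.span (Set.range y) ⊔ M ^ 2) (he : e ≤ M.height) :
    IsRegularLocalRing (Localization.AtPrime M) := by
  let B := Localization.AtPrime M
  have : IsNoetherianRing B := IsLocalization.isNoetherianRing M.primeCompl B ‹_›
  have hmap : M.map (algebraMap A B) = maximalIdeal B :=
    IsLocalization.AtPrime.map_eq_maximalIdeal M B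
  have hspan : maximalIdeal B = Ideal.span (Set.range (algebraMap A B ∘ y)) := by
    rw [Set.range_comp, ← Ideal.map_span]
    refine le_antisymm ?_ ?_
    · refine Submodule.le_of_le_smul_of_le_jacobson_bot (IsNoetherian.noetherian _)
        (maximalIdeal_le_jacobson _) ?_
      have := Ideal.map_mono (f := algebraMap A B) hM
      rwa [Ideal.map_sup, Ideal.map_pow, hmap, pow_two] at this
    · rw [← hmap]
      exact Ideal.map_mono (Ideal.span_le.2 (Set.range_subset_iff.2 hy))
  refine IsRegularLocalRing.of_spanFinrank_maximalIdeal_le B ?_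
  rw [IsLocalization.AtPrime.ringKrullDim_eq_height M B, hspan]
  refine le_trans ?_ (WithBot.coe_le_coe.2 he)
  have := Submodule.spanFinrank_span_le_ncard_of_finite
    (R := B) (Set.finite_range (algebraMap A B ∘ y))
  have hcard := Finite.card_range_le (algebraMap A B ∘ y)
  rw [Nat.card_fin, Nat.card_coe_set_eq] at hcard
  exact_mod_cast this.trans hcard

theorem exists_mul_mem_of_mem_minimalPrimes {R : Type*} [CommRing R] {J p q : Ideal R}
    {M : Ideal (R ⧸ J)} [M.IsPrime] [IsDomain (Localization.AtPrime M)]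
    (hM : M.comap (Ideal.Quotient.mk J) = p) (hq : q ∈ J.minimalPrimes) (hqp : q ≤ p) {g : R}
    (hg : g ∈ q) : ∃ s ∉ p, s * g ∈ J := by
  let φ := (algebraMap (R ⧸ J) (Localization.AtPrime M)).comp (Ideal.Quotient.mk J)
  have hker {f : R} (hf : f ∈ RingHom.ker φ) : ∃ s ∉ p, s * f ∈ J := by
    obtain ⟨⟨s, hs⟩, hsf⟩ := (IsLocalization.map_eq_zero_iff M.primeCompl _ _).1 hf
    obtain ⟨s, rfl⟩ := Ideal.Quotient.mk_surjective s
    rw [← map_mul] at hsf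
    exact ⟨s, fun hsp => hs (hM.ge hsp), Ideal.Quotient.eq_zero_iff_mem.1 hsf⟩
  refine hker (hq.2 ⟨RingHom.ker_isPrime φ, fun f hf => ?_⟩ (fun f hf => ?_) hg)
  · rw [RingHom.mem_ker, RingHom.comp_apply, Ideal.Quotient.eq_zero_iff_mem.2 hf, map_zero]
  · obtain ⟨s, hs, hsf⟩ := hker hf
    exact (hq.1.1.mem_or_mem (hq.1.2 hsf)).resolve_left fun h => hs (hqp h)

theorem exists_sup_span_range_eq_top {K V : Type*} [DivisionRing K] [AddCommGroup V] [Module K V]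
    [FiniteDimensional K V] (N : Submodule K V) {e : ℕ}
    (he : e + Module.finrank K N = Module.finrank K V) :
    ∃ u : Fin e → V, N ⊔ Submodule.span K (Set.range u) = ⊤ := by
  obtain ⟨N', hN'⟩ := N.exists_isCompl
  have hfin := Submodule.finrank_add_eq_of_isCompl hN'
  let b := Module.finBasisOfFinrankEq K N' (n := e) (by lia)
  refine ⟨N'.subtype ∘ b, ?_⟩
  rw [Set.range_comp, ← Submodule.map_span, b.span_eq, Submodule.map_subtype_top, hN'.sup_eq_top]

variable {J q : Ideal (MvPolynomial (Fin (n + 1)) k)} {v : Fin (n + 1) → k}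

/-- The affine form with the given linear part that vanishes at `v`. -/
noncomputable def affineForm (v : Fin (n + 1) → k) :
    (Fin (n + 1) → k) →ₗ[k] MvPolynomial (Fin (n + 1)) k :=
  Fintype.linearCombination k fun j => X j - C (v j)

theorem affineForm_single (j : Fin (n + 1)) : affineForm v (Pi.single j 1) = X j - C (v j) := by
  rw [affineForm, Fintype.linearCombination_apply_single, one_smul]

theorem affineForm_mem_ker_eval (w : Fin (n + 1) → k) :
    affineForm v w ∈ RingHom.ker (eval v) := by
  simp [affineForm, Fintype.linearCombination_apply, smul_eval]

theorem sub_affineForm_gradientMap_mem_sq (g : MvPolynomial (Fin (n + 1)) k) :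
    g - C (eval v g) - affineForm v (gradientMap v g) ∈ RingHom.ker (eval v) ^ 2 := by
  induction g using MvPolynomial.induction_on with
  | C x =>
    have hC : gradientMap v (C x) = 0 := by
      funext j
      simp [gradientMap, gradientAt]
    simp [hC]
  | add f g hf hg =>
    convert add_mem hf hg using 1
    rw [map_add, map_add, map_add, map_add]
    ring
  | mul_X f i hf =>
    have hX : gradientMap v (X i) = Pi.single i 1 := by
      funext j
      simp [gradientMap, gradientAt, pderiv_X, Pi.single_apply, eq_comm]
    have hsq : affineForm v (gradientMap v f) * (X i - C (v i)) ∈ RingHom.ker (eval v) ^ 2 :=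
      pow_two (RingHom.ker (eval v)) ▸
        Ideal.mul_mem_mul (affineForm_mem_ker_eval _) (by simp)
    convert add_mem (Ideal.mul_mem_right (X i) _ hf) hsq using 1
    rw [gradientMap_mul, hX, map_add, map_smul, map_smul, affineForm_single, map_mul, eval_X,
      map_mul, smul_eq_C_mul, smul_eq_C_mul]
    ring

theorem ker_eval_le_sup_sq {e : ℕ} (hJ : J ≤ RingHom.ker (eval v)) {u : Fin e → Fin (n + 1) → k}
    (hu : conormalSpace J v ⊔ Submodule.span k (Set.range u) = ⊤) :
    RingHom.ker (eval v) ≤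
      J ⊔ (Ideal.span (Set.range (affineForm v ∘ u)) ⊔ RingHom.ker (eval v) ^ 2) := by
  let L := J ⊔ (Ideal.span (Set.range (affineForm v ∘ u)) ⊔ RingHom.ker (eval v) ^ 2)
  have hsq : RingHom.ker (eval v) ^ 2 ≤ L := le_sup_right.trans le_sup_right
  have htaylor (g) (hg : eval v g = 0) : g - affineForm v (gradientMap v g) ∈ L := by
    simpa [hg] using hsq (sub_affineForm_gradientMap_mem_sq (v := v) g)
  have htop : ⊤ ≤ (L.restrictScalars k).comap (affineForm v) := by
    refine hu.ge.trans (sup_le ?_ (Submodule.span_le.2 ?_))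
    · rintro _ ⟨f, hf, rfl⟩
      exact (Submodule.sub_mem_iff_right L (Ideal.mem_sup_left hf)).1 (htaylor f (hJ hf))
    · rintro _ ⟨i, rfl⟩
      exact Ideal.mem_sup_right (Ideal.mem_sup_left (Ideal.subset_span ⟨i, rfl⟩))
  exact fun g hg => (Submodule.sub_mem_iff_left L (htop Submodule.mem_top)).1 (htaylor g hg)

theorem isRegularLocalRing_atPrime_of_finrank_conormalSpace
    {M : Ideal (MvPolynomial (Fin (n + 1)) k ⧸ J)} [M.IsMaximal]
    (hM : M.comap (Ideal.Quotient.mk J) = RingHom.ker (eval v)) [q.IsPrime] (hJq : J ≤ q)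
    (hqv : q ≤ RingHom.ker (eval v))
    (hdim : natTrdeg k (MvPolynomial (Fin (n + 1)) k ⧸ q) +
      Module.finrank k (conormalSpace J v) = n + 1) :
    IsRegularLocalRing (Localization.AtPrime M) := by
  obtain ⟨u, hu⟩ := exists_sup_span_range_eq_top (conormalSpace J v) (by
    rwa [Module.finrank_fin_fun])
  have hsurj : Function.Surjective (Ideal.Quotient.mk J) := Ideal.Quotient.mk_surjective
  have hMmap : (RingHom.ker (eval v)).map (Ideal.Quotient.mk J) = M := by
    rw [← hM, Ideal.map_comap_of_surjective _ hsurj]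
  refine isRegularLocalRing_atPrime_of_le_sup_sq (y := Ideal.Quotient.mk J ∘ affineForm v ∘ u)
    (fun i => hM.ge (affineForm_mem_ker_eval (u i))) ?_ ?_
  · have := Ideal.map_mono (f := Ideal.Quotient.mk J) (ker_eval_le_sup_sq (hJq.trans hqv) hu)
    rwa [Ideal.map_sup, Ideal.map_sup, Ideal.map_quotient_self, bot_sup_eq, Ideal.map_pow, hMmap,
      Ideal.map_span, ← Set.range_comp] at this
  · have : (q.map (Ideal.Quotient.mkₐ k J)).IsPrime :=
      Ideal.map_isPrime_of_surjective (f := Ideal.Quotient.mkₐ k J) hsurj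
        (Ideal.mk_ker.trans_le hJq)
    rw [← natTrdeg_eq_of_algEquiv (DoubleQuot.quotQuotEquivQuotOfLEₐ k hJq)]
    exact le_add_self.trans (height_add_natTrdeg_quotient_le_height
      ((Ideal.map_mono hqv).trans hMmap.le))

theorem exists_eval_ne_zero_mul_mem_of_mem_minimalPrimes (hq : q ∈ J.minimalPrimes)
    (hqv : q ≤ RingHom.ker (eval v))
    (hdim : natTrdeg k (MvPolynomial (Fin (n + 1)) k ⧸ q) +
      Module.finrank k (conormalSpace J v) = n + 1)
    {g : MvPolynomial (Fin (n + 1)) k} (hg : g ∈ q) : ∃ s, eval v s ≠ 0 ∧ s * g ∈ J := by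
  have := hq.1.1
  have hker : RingHom.ker (Ideal.Quotient.mk J) ≤ RingHom.ker (eval v) :=
    Ideal.mk_ker.trans_le (hq.1.2.trans hqv)
  have hmax := Ideal.IsMaximal.map_of_surjective_of_ker_le (Ideal.Quotient.mk_surjective) hker
  have hM := (Ideal.comap_map_of_surjective' _ Ideal.Quotient.mk_surjective _).trans
    (sup_eq_left.2 hker)
  have := isRegularLocalRing_atPrime_of_finrank_conormalSpace hM hq.1.2 hqv hdim
  have := isDomain_of_isRegularLocalRing (Localization.AtPrime
    ((RingHom.ker (eval v)).map (Ideal.Quotient.mk J)))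
  exact exists_mul_mem_of_mem_minimalPrimes hM hq hqv hg

theorem eq_of_mem_minimalPrimes_of_finrank_conormalSpace
    {q' : Ideal (MvPolynomial (Fin (n + 1)) k)} (hq : q ∈ J.minimalPrimes)
    (hq' : q' ∈ J.minimalPrimes) (hqv : q ≤ RingHom.ker (eval v))
    (hqv' : q' ≤ RingHom.ker (eval v))
    (hdim : natTrdeg k (MvPolynomial (Fin (n + 1)) k ⧸ q) +
      Module.finrank k (conormalSpace J v) = n + 1) : q = q' := by
  suffices hle : q ≤ q' from hle.antisymm (hq'.2 hq.1 hle)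
  intro g hg
  obtain ⟨s, hs, hsg⟩ := exists_eval_ne_zero_mul_mem_of_mem_minimalPrimes hq hqv hdim hg
  exact (hq'.1.1.mem_or_mem (hq'.1.2 hsg)).resolve_left fun h => hs (hqv' h)

theorem conormalSpace_eq_of_mem_minimalPrimes (hq : q ∈ J.minimalPrimes)
    (hqv : q ≤ RingHom.ker (eval v))
    (hdim : natTrdeg k (MvPolynomial (Fin (n + 1)) k ⧸ q) +
      Module.finrank k (conormalSpace J v) = n + 1) : conormalSpace q v = conormalSpace J v := by
  refine le_antisymm ?_ (Submodule.map_mono fun g hg => hq.1.2 hg)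
  rintro _ ⟨g, hg, rfl⟩
  obtain ⟨s, hs, hsg⟩ := exists_eval_ne_zero_mul_mem_of_mem_minimalPrimes hq hqv hdim hg
  have hgrad : gradientMap v (s * g) = eval v s • gradientMap v g := by
    rw [gradientMap_mul, hqv hg, zero_smul, add_zero]
  exact (Submodule.smul_mem_iff _ hs).1 (hgrad ▸ ⟨s * g, hsg, rfl⟩)

end LocalRings

section SmoothSections

attribute [local instance] MvPolynomial.gradedAlgebra

theorem exists_mem_le_of_sInf_le {A : Type*} [CommRing A] {s : Set (Ideal A)} (hs : s.Finite)
    {P : Ideal A} [hP : P.IsPrime] (h : sInf s ≤ P) : ∃ q ∈ s, q ≤ P := by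
  rw [← hs.coe_toFinset, ← Finset.inf_id_eq_sInf, hP.inf_le'] at h
  simpa only [hs.mem_toFinset, id] using h

variable {I J q : Ideal (MvPolynomial (Fin (n + 1)) k)} {h : MvPolynomial (Fin (n + 1)) k}
  {a d t : ℕ} {X : Set (ProjPt k n)}

theorem forall_mem_sup_span_singleton_iff {v : Fin (n + 1) → k} :
    (∀ g ∈ I ⊔ Ideal.span {h}, eval v g = 0) ↔ (∀ g ∈ I, eval v g = 0) ∧ eval v h = 0 := by
  change I ⊔ Ideal.span {h} ≤ RingHom.ker (eval v) ↔ I ≤ RingHom.ker (eval v) ∧ _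
  rw [sup_le_iff, Ideal.span_singleton_le_iff_mem, RingHom.mem_ker]

theorem forall_mem_radical_iff {v : Fin (n + 1) → k} :
    (∀ g ∈ J.radical, eval v g = 0) ↔ ∀ g ∈ J, eval v g = 0 :=
  (isMaximal_ker_eval v).isPrime.radical_le_iff

theorem idealOfVars_le_radical_of_forall_eq_zero [IsAlgClosed k]
    (hJ : ∀ v, (∀ g ∈ J, eval v g = 0) → v = 0) : idealOfVars (Fin (n + 1)) k ≤ J.radical := by
  rw [← vanishingIdeal_zeroLocus_eq_radical (K := k)]
  intro f hf
  rw [mem_vanishingIdeal_iff]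
  intro v hv
  rw [hJ v hv]
  exact mem_idealOfVars_iff_eval_zero.1 hf

/- By connectedness, one component of the section would meet the union of the others; but a smooth
point lies on a single component. -/
theorem subsingleton_minimalPrimes_sup_span_singleton [IsAlgClosed k] [I.IsPrime] (ha : 0 < a)
    (hI : I.IsHomogeneous (homogeneousSubmodule (Fin (n + 1)) k))
    (hdim : natTrdeg k (MvPolynomial (Fin (n + 1)) k ⧸ I) = t + 3) (hh : h.IsHomogeneous a)
    (hhI : h ∉ I)
    (hrank : ∀ v ≠ 0, (∀ g ∈ I ⊔ Ideal.span {h}, eval v g = 0) →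
      t + 2 + Module.finrank k (conormalSpace (I ⊔ Ideal.span {h}) v) = n + 1) :
    (I ⊔ Ideal.span {h}).minimalPrimes.Subsingleton := by
  have : Infinite k := IsAlgClosed.instInfinite
  let J := I ⊔ Ideal.span {h}
  have hJ := isHomogeneous_sup_span_singleton hI hh
  intro q₁ hq₁ q₂ hq₂
  by_contra hne
  let I₂ := sInf (J.minimalPrimes \ {q₁})
  have hI₂ : I₂.IsHomogeneous (homogeneousSubmodule (Fin (n + 1)) k) :=
    Ideal.IsHomogeneous.sInf fun q hq => isHomogeneous_of_mem_minimalPrimes hJ hq.1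
  have hprod : q₁ * I₂ ≤ J.radical := by
    rw [← Ideal.sInf_minimalPrimes]
    refine le_sInf fun q hq => ?_
    by_cases hqq₁ : q = q₁
    · exact hqq₁ ▸ Ideal.mul_le_left
    · exact Ideal.mul_le_right.trans (sInf_le ⟨hq, hqq₁⟩)
  refine not_idealOfVars_le_radical_sup ha hI hdim hh hhI
    (isHomogeneous_of_mem_minimalPrimes hJ hq₁) hI₂ hprod hq₁ le_rfl hq₂
    (sInf_le ⟨hq₂, Ne.symm hne⟩) ?_
  refine idealOfVars_le_radical_of_forall_eq_zero fun v hv => ?_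
  by_contra hv₀
  have hker : q₁ ⊔ I₂ ≤ RingHom.ker (eval v) := hv
  obtain ⟨q, ⟨hq, hqq₁⟩, hqv⟩ := exists_mem_le_of_sInf_le
    ((Ideal.finite_minimalPrimes_of_isNoetherianRing _ J).subset Set.sdiff_subset)
    (le_sup_right.trans hker)
  have hqdim : natTrdeg k (MvPolynomial (Fin (n + 1)) k ⧸ q) = t + 2 := by
    have := natTrdeg_quotient_eq_add_one_of_mem_minimalPrimes_sup (K := k) hhI hq
    lia
  exact hqq₁ (eq_of_mem_minimalPrimes_of_finrank_conormalSpace hq hq₁ hqv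
    (le_sup_left.trans hker) (hqdim ▸ hrank v hv₀ fun g hg => hqv (hq.1.2 hg)))

theorem inter_projZeroLocus_singleton_eq [Infinite k] (hX : IsClosedSub X)
    (hh : h.IsHomogeneous a) :
    X ∩ projZeroLocus {h} =
      projZerosOfIdeal (projVanishingIdeal X ⊔ Ideal.span {h}).radical := by
  ext x
  induction x using Projectivization.ind with
  | h v hv =>
    rw [mk_mem_projZerosOfIdeal_iff (isHomogeneous_sup_span_singleton
      (isHomogeneous_projVanishingIdeal X) hh).radical hv, forall_mem_radical_iff,
      forall_mem_sup_span_singleton_iff, Set.mem_inter_iff, mk_mem_iff_of_isClosedSub hX hv,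
      mk_mem_projZeroLocus_singleton_iff hh hv]

theorem IsSmoothVariety.finrank_conormalSpace [Infinite k] (hX : IsSmoothVariety X d)
    {v : Fin (n + 1) → k} (hv : v ≠ 0) (hvX : ∀ g ∈ projVanishingIdeal X, eval v g = 0) :
    Module.finrank k (conormalSpace (projVanishingIdeal X) v) = n - d := by
  rw [← span_gradientAt_homVanishingPolys]
  exact hX.2.2.2 _ ((mk_mem_iff_of_isClosedSub hX.1 hv).2 hvX) v hv rfl

theorem IsSmoothVariety.natTrdeg_eq [IsAlgClosed k] (hX : IsSmoothVariety X d) :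
    natTrdeg k (MvPolynomial (Fin (n + 1)) k ⧸ projVanishingIdeal X) = d + 1 :=
  (hasDim_iff_natTrdeg_eq hX.1 hX.2.1).1 hX.2.2.1

theorem IsSmoothVariety.le [IsAlgClosed k] (hX : IsSmoothVariety X d) : d ≤ n := by
  have hle := natTrdeg_le_of_surjective (Ideal.Quotient.mkₐ k (projVanishingIdeal X))
    (Ideal.Quotient.mkₐ_surjective _ _)
  rw [hX.natTrdeg_eq, natTrdeg_mvPolynomial, Nat.card_fin] at hle
  lia

theorem isSmoothVariety_projZerosOfIdeal [IsAlgClosed k] [q.IsPrime]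
    (hq : q.IsHomogeneous (homogeneousSubmodule (Fin (n + 1)) k))
    (hdim : natTrdeg k (MvPolynomial (Fin (n + 1)) k ⧸ q) = d + 1)
    (hrank : ∀ v ≠ 0, (∀ g ∈ q, eval v g = 0) →
      Module.finrank k (conormalSpace q v) = n - d) :
    IsSmoothVariety (projZerosOfIdeal q) d := by
  have : Infinite k := IsAlgClosed.instInfinite
  have hvars : ¬ idealOfVars (Fin (n + 1)) k ≤ q := fun hle => by
    have := natTrdeg_quotient_le_of_le (K := k) hle
    rw [natTrdeg_quotient_idealOfVars] at this
    lia
  have hvan := projVanishingIdeal_projZerosOfIdeal hq hvars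
  have hclosed := isClosedSub_projZerosOfIdeal q
  have hirr : IsIrredSub (projZerosOfIdeal q) :=
    isIrredSub_of_isPrime_projVanishingIdeal (by rwa [hvan])
  refine ⟨hclosed, hirr, (hasDim_iff_natTrdeg_eq hclosed hirr).2 (by rwa [hvan]), ?_⟩
  rintro _ hx v hv rfl
  rw [span_gradientAt_homVanishingPolys, hvan]
  exact hrank v hv ((mk_mem_projZerosOfIdeal_iff hq hv).1 hx)

theorem IsSmoothVariety.notMem_of_forall_not_tangentAt [IsAlgClosed k] (hX : IsSmoothVariety X d)
    (htan : ∀ v ≠ 0, ¬ TangentAt (projVanishingIdeal X) h v) : h ∉ projVanishingIdeal X := by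
  obtain ⟨x, hx⟩ := hX.2.1.1
  induction x using Projectivization.ind with
  | h v hv =>
    have hvX := (mk_mem_iff_of_isClosedSub hX.1 hv).1 hx
    exact fun hh => htan v hv ⟨hvX, hvX h hh, h, hh, rfl⟩

theorem IsSmoothVariety.finrank_conormalSpace_sup [IsAlgClosed k] (hX : IsSmoothVariety X d)
    (htan : ∀ v ≠ 0, ¬ TangentAt (projVanishingIdeal X) h v) {v : Fin (n + 1) → k} (hv : v ≠ 0)
    (hvJ : ∀ g ∈ projVanishingIdeal X ⊔ Ideal.span {h}, eval v g = 0) :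
    Module.finrank k (conormalSpace (projVanishingIdeal X ⊔ Ideal.span {h}) v) = n - d + 1 := by
  have : Infinite k := IsAlgClosed.instInfinite
  obtain ⟨hvX, hvh⟩ := forall_mem_sup_span_singleton_iff.1 hvJ
  rw [conormalSpace_sup_span_singleton hvh, Submodule.finrank_sup_span_singleton
    fun hmem => htan v hv ⟨hvX, hvh, hmem⟩, hX.finrank_conormalSpace hv hvX]

theorem IsSmoothVariety.inter_projZeroLocus_singleton [IsAlgClosed k]
    (hX : IsSmoothVariety X (t + 2)) (ha : 0 < a) (hh : h.IsHomogeneous a)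
    (htan : ∀ v ≠ 0, ¬ TangentAt (projVanishingIdeal X) h v) :
    IsSmoothVariety (X ∩ projZeroLocus {h}) (t + 1) := by
  have : Infinite k := IsAlgClosed.instInfinite
  let J := projVanishingIdeal X ⊔ Ideal.span {h}
  have hn := hX.le
  have hprime := isPrime_projVanishingIdeal hX.2.1
  have hI := isHomogeneous_projVanishingIdeal X
  have hhI := hX.notMem_of_forall_not_tangentAt htan
  have hJ : J.IsHomogeneous (homogeneousSubmodule (Fin (n + 1)) k) :=
    isHomogeneous_sup_span_singleton hI hh
  have hJvars : J ≤ idealOfVars (Fin (n + 1)) k :=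
    sup_le (le_idealOfVars_of_isHomogeneous hI hprime.ne_top) <|
      (Ideal.span_singleton_le_iff_mem _).2 <|
        Ideal.pow_le_self one_ne_zero (mem_pow_idealOfVars_of_isHomogeneous hh ha)
  obtain ⟨q, hq, -⟩ := Ideal.exists_minimalPrimes_le hJvars
  have hqprime : q.IsPrime := hq.1.1
  have hdim := natTrdeg_quotient_eq_add_one_of_mem_minimalPrimes_sup (K := k) hhI hq
  rw [hX.natTrdeg_eq] at hdim
  have hrank {v} (hv : v ≠ 0) (hvJ : ∀ g ∈ J, eval v g = 0) :=
    hX.finrank_conormalSpace_sup htan hv hvJ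
  have hrad : J.radical = q := by
    have huniq := subsingleton_minimalPrimes_sup_span_singleton ha hI hX.natTrdeg_eq hh hhI
      fun v hv hvJ => by rw [hrank hv hvJ]; lia
    rw [← Ideal.sInf_minimalPrimes, huniq.eq_singleton_of_mem hq, sInf_singleton]
  rw [inter_projZeroLocus_singleton_eq hX.1 hh, hrad]
  refine isSmoothVariety_projZerosOfIdeal (isHomogeneous_of_mem_minimalPrimes hJ hq) (by lia)
    fun v hv hvq => ?_
  have hrankv := hrank hv fun g hg => hvq g (hq.1.2 hg)
  rw [conormalSpace_eq_of_mem_minimalPrimes hq hvq (by rw [hrankv]; lia), hrankv]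
  lia

end SmoothSections

theorem general_hypersurface_through_point_on_X_smooth_irreducible_general
    {k : Type} [Field k] [IsAlgClosed k] {n : ℕ}
    (X : Set (ProjPt k n)) (d : ℕ) (hd : 2 ≤ d) (hX : IsSmoothVariety X d)
    (P0 : ProjPt k n) (hP0 : P0 ∈ X) (a : ℕ) (ha : 1 < a) :
    ∃ Z : Set (MvPolynomial (Fin (n+1)) k), IsZClosed k Z ∧ IsCone k Z ∧
      (∃ h : MvPolynomial (Fin (n+1)) k,
        h.IsHomogeneous a ∧ h ≠ 0 ∧ VanishesAt h P0 ∧ h ∉ Z) ∧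
      (∀ h : MvPolynomial (Fin (n+1)) k,
        h.IsHomogeneous a → h ≠ 0 → VanishesAt h P0 → h ∉ Z →
          IsSmoothVariety (X ∩ projZeroLocus {h}) (d - 1)) := by
  have : Infinite k := IsAlgClosed.instInfinite
  have := isPrime_projVanishingIdeal hX.2.1
  have hn := hX.le
  obtain ⟨t, rfl⟩ := Nat.exists_eq_add_of_le' hd
  induction P0 using Projectivization.ind with
  | h v₀ hv₀ =>
    have hv₀X := (mk_mem_iff_of_isClosedSub hX.1 hv₀).1 hP0
    obtain ⟨Z, hZ, hcone, ⟨h₀, hh₀, hh₀Z⟩, htan⟩ :=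
      exists_isZClosed_isCone_forall_not_tangentAt (isHomogeneous_projVanishingIdeal X)
        (by rw [hX.natTrdeg_eq]; lia) (by lia) (fun v => hX.finrank_conormalSpace) ha hv₀ hv₀X
    refine ⟨Z, hZ, hcone, ⟨h₀, hh₀.1, ?_, (vanishesAt_mk_iff hh₀.1 hv₀).2 hh₀.2, hh₀Z⟩,
      fun h hh _ hhv hhZ => hX.inter_projZeroLocus_singleton (by lia) hh
        (htan h ⟨hh, (vanishesAt_mk_iff hh hv₀).1 hhv⟩ hhZ)⟩
    rintro rfl
    exact htan 0 hh₀ hh₀Z v₀ hv₀ ⟨hv₀X, map_zero _, by rw [map_zero]; exact zero_mem _⟩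

/-- **Bertini-type theorem (one point, hypersurfaces of degree `a > 1`).**
Let `X` be an irreducible smooth projective variety of dimension `d ≥ 2` in `ℙⁿ` over an
algebraically closed field of characteristic zero.  For any closed point `P0` on `X` and any
degree `a > 1`, a general hypersurface of degree `a` passing through `P0` intersects `X` in an
irreducible smooth subvariety of codimension `1` on `X`:  there is a proper Zariski-closed cone
`Z` in the space of degree-`a` forms such that some degree-`a` form through `P0` lies outside
`Z`, and for every degree-`a` form `h` through `P0` outside `Z` the intersection of `X` with
the hypersurface `h = 0` is an irreducible smooth variety of dimension `d - 1`. -/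
theorem general_hypersurface_through_point_on_X_smooth_irreducible
    {k : Type} [Field k] [IsAlgClosed k] [CharZero k] {n : ℕ}
    (X : Set (ProjPt k n)) (d : ℕ) (hd : 2 ≤ d) (hX : IsSmoothVariety X d)
    (P0 : ProjPt k n) (hP0 : P0 ∈ X) (a : ℕ) (ha : 1 < a) :
    ∃ Z : Set (MvPolynomial (Fin (n+1)) k), IsZClosed k Z ∧ IsCone k Z ∧
      (∃ h : MvPolynomial (Fin (n+1)) k,
        h.IsHomogeneous a ∧ h ≠ 0 ∧ VanishesAt h P0 ∧ h ∉ Z) ∧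
      (∀ h : MvPolynomial (Fin (n+1)) k,
        h.IsHomogeneous a → h ≠ 0 → VanishesAt h P0 → h ∉ Z →
          IsSmoothVariety (X ∩ projZeroLocus {h}) (d - 1)) :=
  general_hypersurface_through_point_on_X_smooth_irreducible_general X d hd hX P0 hP0 a ha
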